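/- arXiv:1601.02205 — 2 statements merged into one kernel-verified Lean document; each statement's English description precedes it below -/
import Mathlib

section
/- For Lebesgue-almost every x ∈ [0,1), the limit lim_{n→∞} (1/n)·log q_n(x) exists and equals π²/(12·log 2). -/
open Filter MeasureTheory Real Topology

/-- `cfQ a n` is the continued fraction denominator `Q_{n-1}` of the sequence
`a 1, a 2, …` (so `cfQ a 0 = Q_{-1} = 0`, `cfQ a 1 = Q_0 = 1`, and
`Q_n = a_n Q_{n-1} + Q_{n-2}` for `n ≥ 1`). -/
def cfQ (a : ℕ → ℕ) : ℕ → ℤ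
  | 0 => 0
  | 1 => 1
  | n + 2 => (a (n + 1) : ℤ) * cfQ a (n + 1) + cfQ a n

/-- The Gauss map `T x = 1/x − ⌊1/x⌋` for `x ≠ 0`, `T 0 = 0`
(note `(0 : ℝ)⁻¹ = 0` in Lean, so `Int.fract x⁻¹` covers both cases). -/
noncomputable def gaussMap (x : ℝ) : ℝ := Int.fract x⁻¹

/-- The `n`-th partial quotient of `x` (for `n ≥ 1`):
`a_1(x) = ⌊1/x⌋` and `a_n(x) = a_1(T^{n−1} x)`. -/
noncomputable def pq (x : ℝ) (n : ℕ) : ℕ := (⌊(gaussMap^[n - 1] x)⁻¹⌋).toNat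

/-- The denominator `q_n(x)` of the `n`-th convergent `[a_1(x), …, a_n(x)]`. -/
noncomputable def qden (x : ℝ) (n : ℕ) : ℤ := cfQ (pq x) (n + 1)

/-!
Since `q_n + q_{n-1} T^n x = ∏_{k<n} 1 / T^k x`, the number `log q_n(x)` differs by at most `log 2`
from the Birkhoff sum of `-log` along the orbit of `x`. The Gauss measure `dx / ((1 + x) log 2)` is
invariant under `T`, and its transfer operator `P` exchanges increasing and decreasing functions.
The `k`-th inverse branch at `1` is the `(k + 1)`-st one at `0` with twice the weight, so
`2 * P f 0 = f 1 + P f 1`, and `P` also halves the oscillation `|f 1 - f 0|` of a monotone `f`.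
As `P (-log)` is monotone, the correlations of `-log` along orbits decay exponentially, and a second
moment argument along the squares gives the law of large numbers for its Birkhoff sums. The limit
is the integral of `-log` against the Gauss measure, i.e. `(log 2)⁻¹ * ∑ (-1)^k / (k + 1)^2`.
-/

/-! ### Denominators of the convergents -/

theorem gaussMap_mem_Ico (x : ℝ) : gaussMap x ∈ Set.Ico (0 : ℝ) 1 :=
  ⟨Int.fract_nonneg _, Int.fract_lt_one _⟩

theorem irrational_gaussMap {x : ℝ} (hx : Irrational x) : Irrational (gaussMap x) :=
  (irrational_inv_iff.mpr hx).sub_intCast _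

section Denominators

variable {x : ℝ} (hx : Irrational x) (hx01 : x ∈ Set.Ioo (0 : ℝ) 1)

include hx in
theorem irrational_gaussMap_iterate (n : ℕ) : Irrational (gaussMap^[n] x) := by
  induction n with
  | zero => exact hx
  | succ n ih => rw [Function.iterate_succ_apply']; exact irrational_gaussMap ih

include hx hx01

theorem gaussMap_iterate_mem_Ioo (n : ℕ) : gaussMap^[n] x ∈ Set.Ioo (0 : ℝ) 1 := by
  cases n with
  | zero => exact hx01
  | succ n =>
    have hne := (irrational_gaussMap_iterate hx (n + 1)).ne_zero
    rw [Function.iterate_succ_apply'] at hne ⊢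
    have hmem := gaussMap_mem_Ico (gaussMap^[n] x)
    exact ⟨lt_of_le_of_ne hmem.1 hne.symm, hmem.2⟩

theorem one_le_floor_inv_gaussMap_iterate (n : ℕ) : 1 ≤ ⌊(gaussMap^[n] x)⁻¹⌋ := by
  obtain ⟨hpos, hlt⟩ := gaussMap_iterate_mem_Ioo hx hx01 n
  rw [Int.le_floor, Int.cast_one]
  exact (one_le_inv₀ hpos).mpr hlt.le

theorem pq_succ_eq_floor (n : ℕ) : (pq x (n + 1) : ℤ) = ⌊(gaussMap^[n] x)⁻¹⌋ :=
  Int.toNat_of_nonneg (zero_le_one.trans (one_le_floor_inv_gaussMap_iterate hx hx01 n))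

theorem pq_succ_add_gaussMap_iterate (n : ℕ) :
    pq x (n + 1) + gaussMap^[n + 1] x = (gaussMap^[n] x)⁻¹ := by
  rw [← Int.cast_natCast, pq_succ_eq_floor hx hx01, Function.iterate_succ_apply']
  exact Int.floor_add_fract _

theorem cfQ_pq_nonneg_and_le_succ_and_succ_pos (n : ℕ) :
    0 ≤ cfQ (pq x) n ∧ cfQ (pq x) n ≤ cfQ (pq x) (n + 1) ∧ 0 < cfQ (pq x) (n + 1) := by
  induction n with
  | zero => simp [cfQ]
  | succ n ih =>
    obtain ⟨hnonneg, hle, hpos⟩ := ih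
    have hpq : 1 ≤ (pq x (n + 1) : ℤ) :=
      (pq_succ_eq_floor hx hx01 n).symm ▸ one_le_floor_inv_gaussMap_iterate hx hx01 n
    have hsucc : cfQ (pq x) (n + 1) ≤ cfQ (pq x) (n + 2) := by
      rw [cfQ]
      nlinarith
    exact ⟨hpos.le, hsucc, hpos.trans_le hsucc⟩

theorem cfQ_add_mul_gaussMap_iterate (n : ℕ) :
    (cfQ (pq x) (n + 1) + cfQ (pq x) n * gaussMap^[n] x : ℝ) =
      ∏ k ∈ Finset.range n, (gaussMap^[k] x)⁻¹ := by
  induction n with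
  | zero => simp [cfQ]
  | succ n ih =>
    have hne : gaussMap^[n] x ≠ 0 := (gaussMap_iterate_mem_Ioo hx hx01 n).1.ne'
    have hpq := pq_succ_add_gaussMap_iterate hx hx01 n
    rw [Finset.prod_range_succ, ← ih, cfQ]
    push_cast
    calc (pq x (n + 1) * cfQ (pq x) (n + 1) + cfQ (pq x) n +
          cfQ (pq x) (n + 1) * gaussMap^[n + 1] x : ℝ)
        = cfQ (pq x) (n + 1) * (pq x (n + 1) + gaussMap^[n + 1] x) + cfQ (pq x) n := by ring
      _ = _ := by rw [hpq]; field_simp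

theorem log_prod_inv_eq_birkhoffSum (n : ℕ) :
    log (∏ k ∈ Finset.range n, (gaussMap^[k] x)⁻¹) =
      birkhoffSum gaussMap (fun t => -log t) n x := by
  rw [log_prod fun k _ => inv_ne_zero (gaussMap_iterate_mem_Ioo hx hx01 k).1.ne']
  simp only [log_inv, birkhoffSum]

theorem log_qden_le_birkhoffSum (n : ℕ) :
    log (qden x n) ≤ birkhoffSum gaussMap (fun t => -log t) n x := by
  obtain ⟨hnonneg, -, hpos⟩ := cfQ_pq_nonneg_and_le_succ_and_succ_pos hx hx01 n
  have hT := (gaussMap_iterate_mem_Ioo hx hx01 n).1.le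
  rw [← log_prod_inv_eq_birkhoffSum hx hx01, ← cfQ_add_mul_gaussMap_iterate hx hx01]
  exact log_le_log (mod_cast hpos)
    (le_add_of_nonneg_right (mul_nonneg (mod_cast hnonneg) hT))

theorem birkhoffSum_le_log_qden_add (n : ℕ) :
    birkhoffSum gaussMap (fun t => -log t) n x ≤ log (qden x n) + log 2 := by
  obtain ⟨hnonneg, hle, hpos⟩ := cfQ_pq_nonneg_and_le_succ_and_succ_pos hx hx01 n
  obtain ⟨hT0, hT1⟩ := gaussMap_iterate_mem_Ioo hx hx01 n
  have hpos' : (0 : ℝ) < cfQ (pq x) (n + 1) := mod_cast hpos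
  have hnonneg' : (0 : ℝ) ≤ cfQ (pq x) n := mod_cast hnonneg
  have hle' : (cfQ (pq x) n : ℝ) ≤ cfQ (pq x) (n + 1) := mod_cast hle
  rw [← log_prod_inv_eq_birkhoffSum hx hx01, ← cfQ_add_mul_gaussMap_iterate hx hx01, qden,
    ← log_mul hpos'.ne' two_ne_zero]
  refine log_le_log (add_pos_of_pos_of_nonneg hpos' (mul_nonneg hnonneg' hT0.le)) ?_
  calc (cfQ (pq x) (n + 1) + cfQ (pq x) n * gaussMap^[n] x : ℝ)
      ≤ cfQ (pq x) (n + 1) + cfQ (pq x) n :=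
        add_le_add_right (mul_le_of_le_one_right hnonneg' hT1.le) _
    _ ≤ cfQ (pq x) (n + 1) * 2 := by linarith

end Denominators

/-! ### The Gauss–Kuzmin transfer operator -/

theorem sum_range_sub_mul_le_of_monotone {v w g : ℕ → ℝ} (hg : Monotone g)
    (hvw : ∀ N, ∑ k ∈ Finset.range N, v k ≤ ∑ k ∈ Finset.range N, w k) (n : ℕ) :
    ∑ k ∈ Finset.range n, (w k - v k) * g k ≤
      (∑ k ∈ Finset.range n, w k - ∑ k ∈ Finset.range n, v k) * g n := by
  induction n with
  | zero => simp
  | succ n ih =>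
    have hstep := mul_le_mul_of_nonneg_left (hg n.le_succ) (sub_nonneg.mpr (hvw (n + 1)))
    simp only [Finset.sum_range_succ] at hstep ⊢
    linarith

theorem hasSum_mul_le_hasSum_mul_of_monotone_of_nonneg {v w g : ℕ → ℝ} {s A B : ℝ}
    (hg : Monotone g) (hg0 : ∀ k, 0 ≤ g k) (hv0 : ∀ k, 0 ≤ v k) (hw0 : ∀ k, 0 ≤ w k)
    (hvw : ∀ N, ∑ k ∈ Finset.range N, v k ≤ ∑ k ∈ Finset.range N, w k)
    (hv : HasSum v s) (hw : HasSum w s)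
    (hA : HasSum (fun k => w k * g k) A) (hB : HasSum (fun k => v k * g k) B) : A ≤ B := by
  refine le_of_tendsto' hA.tendsto_sum_nat fun n => ?_
  have habel := sum_range_sub_mul_le_of_monotone hg hvw n
  have hmass : ∑ k ∈ Finset.range n, w k ≤ s := sum_le_hasSum _ (fun k _ => hw0 k) hw
  have htail : (s - ∑ k ∈ Finset.range n, v k) * g n ≤
      B - ∑ k ∈ Finset.range n, v k * g k :=
    hasSum_le (fun k => mul_le_mul_of_nonneg_left (hg (Nat.le_add_left n k)) (hv0 _))
      (((hasSum_nat_add_iff' n).mpr hv).mul_right (g n)) ((hasSum_nat_add_iff' n).mpr hB)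
  have hmass' := mul_le_mul_of_nonneg_right hmass (hg0 n)
  simp only [sub_mul, Finset.sum_sub_distrib] at habel htail
  linarith

theorem hasSum_mul_le_hasSum_mul_of_monotone {v w g : ℕ → ℝ} {s A B : ℝ}
    (hg : Monotone g) (hv0 : ∀ k, 0 ≤ v k) (hw0 : ∀ k, 0 ≤ w k)
    (hvw : ∀ N, ∑ k ∈ Finset.range N, v k ≤ ∑ k ∈ Finset.range N, w k)
    (hv : HasSum v s) (hw : HasSum w s)
    (hA : HasSum (fun k => w k * g k) A) (hB : HasSum (fun k => v k * g k) B) : A ≤ B := by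
  have hshift {u : ℕ → ℝ} {C : ℝ} (hu : HasSum u s) (hC : HasSum (fun k => u k * g k) C) :
      HasSum (fun k => u k * (g k - g 0)) (C - s * g 0) := by
    simpa only [mul_sub] using hC.sub (hu.mul_right (g 0))
  have hle := hasSum_mul_le_hasSum_mul_of_monotone_of_nonneg (g := fun k => g k - g 0)
    (fun i j hij => sub_le_sub_right (hg hij) _) (fun k => sub_nonneg.mpr (hg k.zero_le))
    hv0 hw0 hvw hv hw (hshift hw hA) (hshift hv hB)
  linarith

/-- The inverse branch of the Gauss map with values in `(1/(k+2), 1/(k+1)]`. -/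
noncomputable def gaussBranch (k : ℕ) (x : ℝ) : ℝ := (k + 1 + x)⁻¹

/-- The weight of the `k`-th branch in the transfer operator of the Gauss map with respect to the
Gauss measure, i.e. the Jacobian of `gaussBranch k` for the density `1 / ((1 + x) log 2)`. -/
noncomputable def gaussWeight (k : ℕ) (x : ℝ) : ℝ := (1 + x) / ((k + 1 + x) * (k + 2 + x))

/-- The transfer operator of the Gauss map with respect to the Gauss measure: it is dual to
composition with `gaussMap`. -/
noncomputable def gaussTransfer (f : ℝ → ℝ) (x : ℝ) : ℝ :=
  ∑' k : ℕ, gaussWeight k x * f (gaussBranch k x)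

theorem gaussWeight_nonneg (k : ℕ) {x : ℝ} (hx : 0 ≤ x) : 0 ≤ gaussWeight k x := by
  unfold gaussWeight
  positivity

theorem gaussBranch_mem_Ioc (k : ℕ) {x : ℝ} (hx : 0 ≤ x) :
    gaussBranch k x ∈ Set.Ioc (0 : ℝ) 1 :=
  ⟨inv_pos.mpr (by positivity), inv_le_one_of_one_le₀ (by linarith [k.cast_nonneg (α := ℝ)])⟩

theorem antitoneOn_gaussBranch (k : ℕ) : AntitoneOn (gaussBranch k) (Set.Ici 0) := by
  intro x (hx : 0 ≤ x) y _ hxy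
  unfold gaussBranch
  gcongr

theorem antitone_gaussBranch {x : ℝ} (hx : 0 ≤ x) : Antitone fun k => gaussBranch k x := by
  intro i j hij
  simp only [gaussBranch]
  gcongr

theorem sum_range_gaussWeight (N : ℕ) {x : ℝ} (hx : 0 ≤ x) :
    ∑ k ∈ Finset.range N, gaussWeight k x = N / (N + 1 + x) := by
  induction N with
  | zero => simp
  | succ N ih =>
    rw [Finset.sum_range_succ, ih, gaussWeight]
    push_cast
    field_simp
    ring

theorem hasSum_gaussWeight {x : ℝ} (hx : 0 ≤ x) : HasSum (fun k => gaussWeight k x) 1 := by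
  rw [hasSum_iff_tendsto_nat_of_nonneg fun k => gaussWeight_nonneg k hx]
  simpa only [sum_range_gaussWeight _ hx, add_assoc] using
    tendsto_natCast_div_add_atTop (1 + x)

theorem gaussWeight_le (k : ℕ) {x : ℝ} (hx : x ∈ Set.Icc (0 : ℝ) 1) :
    gaussWeight k x ≤ 2 / (k + 1) ^ 2 := by
  obtain ⟨hx0, hx1⟩ := hx
  unfold gaussWeight
  rw [sq]
  exact div_le_div₀ zero_le_two (by linarith) (by positivity)
    (mul_le_mul (by linarith) (by linarith) (by positivity) (by positivity))

/-- The growth condition admits `-log` besides the bounded functions. -/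
theorem summable_gaussWeight_mul {f : ℝ → ℝ} {C : ℝ}
    (hf : ∀ t ∈ Set.Ioc (0 : ℝ) 1, |f t| ≤ C * √t⁻¹) {x y : ℝ}
    (hx : x ∈ Set.Icc (0 : ℝ) 1) (hy : y ∈ Set.Icc (0 : ℝ) 1) :
    Summable fun k => gaussWeight k x * f (gaussBranch k y) := by
  have hC : 0 ≤ C := by simpa using (abs_nonneg _).trans (hf 1 (by simp))
  have hp : Summable fun k : ℕ => 1 / (k + 1 : ℝ) ^ (3 / 2 : ℝ) := by
    simpa using (summable_nat_add_iff 1).mpr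
      (summable_one_div_nat_rpow.mpr (by norm_num : (1 : ℝ) < 3 / 2))
  refine .of_norm_bounded (hp.mul_left (4 * C)) fun k => ?_
  have hbranch : |f (gaussBranch k y)| ≤ C * (2 * √(k + 1)) := by
    refine (hf _ (gaussBranch_mem_Ioc k hy.1)).trans (mul_le_mul_of_nonneg_left ?_ hC)
    rw [gaussBranch, inv_inv]
    refine sqrt_le_iff.mpr ⟨by positivity, ?_⟩
    rw [mul_pow, sq_sqrt (by positivity)]
    linarith [hy.2, k.cast_nonneg (α := ℝ)]
  have hpow : √(k + 1 : ℝ) / (k + 1) ^ 2 = 1 / (k + 1 : ℝ) ^ (3 / 2 : ℝ) := by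
    rw [one_div, ← rpow_neg (by positivity), sqrt_eq_rpow, ← rpow_natCast,
      ← rpow_sub (by positivity)]
    norm_num
  rw [norm_mul, norm_of_nonneg (gaussWeight_nonneg k hx.1), norm_eq_abs]
  calc gaussWeight k x * |f (gaussBranch k y)|
      ≤ 2 / (k + 1) ^ 2 * (C * (2 * √(k + 1))) :=
        mul_le_mul (gaussWeight_le k hx) hbranch (abs_nonneg _) (by positivity)
    _ = 4 * C * (√(k + 1) / (k + 1) ^ 2) := by ring
    _ = 4 * C * (1 / (k + 1 : ℝ) ^ (3 / 2 : ℝ)) := by rw [hpow]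

theorem abs_le_mul_sqrt_inv_of_abs_le {f : ℝ → ℝ} {C : ℝ}
    (hf : ∀ t ∈ Set.Ioc (0 : ℝ) 1, |f t| ≤ C) (t : ℝ) (ht : t ∈ Set.Ioc (0 : ℝ) 1) :
    |f t| ≤ C * √t⁻¹ :=
  (hf t ht).trans <| le_mul_of_one_le_right ((abs_nonneg _).trans (hf t ht)) <|
    one_le_sqrt.mpr ((one_le_inv₀ ht.1).mpr ht.2)

theorem abs_neg_log_le_two_mul_sqrt_inv (t : ℝ) (ht : t ∈ Set.Ioc (0 : ℝ) 1) :
    |-log t| ≤ 2 * √t⁻¹ := by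
  have hsqrt : log √t⁻¹ = -log t / 2 := by
    rw [log_sqrt (inv_nonneg.mpr ht.1.le), log_inv]
  rw [abs_of_nonneg (neg_nonneg.mpr (log_nonpos ht.1.le ht.2))]
  linarith [log_le_self (sqrt_nonneg t⁻¹)]

/-- Moving `x` to the right shifts the weights towards the later branches and moves every branch
point to the left; both increase the value of an antitone function. -/
theorem monotoneOn_gaussTransfer {f : ℝ → ℝ} {C : ℝ}
    (hf : ∀ t ∈ Set.Ioc (0 : ℝ) 1, |f t| ≤ C * √t⁻¹) (hanti : AntitoneOn f (Set.Ioc 0 1)) :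
    MonotoneOn (gaussTransfer f) (Set.Icc 0 1) := by
  intro x hx y hy hxy
  have hpartial (N : ℕ) :
      ∑ k ∈ Finset.range N, gaussWeight k y ≤ ∑ k ∈ Finset.range N, gaussWeight k x := by
    have hx0 := hx.1
    rw [sum_range_gaussWeight N hx.1, sum_range_gaussWeight N hy.1]
    gcongr
  have hmono : Monotone fun k => f (gaussBranch k x) := fun i j hij =>
    hanti (gaussBranch_mem_Ioc j hx.1) (gaussBranch_mem_Ioc i hx.1)
      (antitone_gaussBranch hx.1 hij)
  calc gaussTransfer f x
      ≤ ∑' k, gaussWeight k y * f (gaussBranch k x) :=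
        hasSum_mul_le_hasSum_mul_of_monotone hmono
          (fun k => gaussWeight_nonneg k hy.1) (fun k => gaussWeight_nonneg k hx.1) hpartial
          (hasSum_gaussWeight hy.1) (hasSum_gaussWeight hx.1)
          (summable_gaussWeight_mul hf hx hx).hasSum (summable_gaussWeight_mul hf hy hx).hasSum
    _ ≤ gaussTransfer f y :=
        (summable_gaussWeight_mul hf hy hx).tsum_le_tsum
          (fun k => mul_le_mul_of_nonneg_left
            (hanti (gaussBranch_mem_Ioc k hy.1) (gaussBranch_mem_Ioc k hx.1)
              (antitoneOn_gaussBranch k hx.1 hy.1 hxy)) (gaussWeight_nonneg k hy.1))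
          (summable_gaussWeight_mul hf hy hy)

theorem gaussTransfer_neg (f : ℝ → ℝ) : gaussTransfer (-f) = -gaussTransfer f := by
  ext x
  simp only [gaussTransfer, Pi.neg_apply, mul_neg, tsum_neg]

theorem gaussTransfer_le_of_le {f : ℝ → ℝ} {B C : ℝ}
    (hf : ∀ t ∈ Set.Ioc (0 : ℝ) 1, |f t| ≤ B * √t⁻¹) (hC : ∀ t ∈ Set.Ioc (0 : ℝ) 1, f t ≤ C)
    {x : ℝ} (hx : x ∈ Set.Icc (0 : ℝ) 1) : gaussTransfer f x ≤ C := by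
  have hconst : HasSum (fun k => gaussWeight k x * C) C := by
    simpa using (hasSum_gaussWeight hx.1).mul_right C
  exact hasSum_le (fun k => mul_le_mul_of_nonneg_left (hC _ (gaussBranch_mem_Ioc k hx.1))
    (gaussWeight_nonneg k hx.1)) (summable_gaussWeight_mul hf hx hx).hasSum hconst

theorem two_mul_gaussTransfer_zero {f : ℝ → ℝ} {C : ℝ}
    (hf : ∀ t ∈ Set.Ioc (0 : ℝ) 1, |f t| ≤ C * √t⁻¹) :
    2 * gaussTransfer f 0 = f 1 + gaussTransfer f 1 := by
  have hbranch (k : ℕ) : gaussBranch (k + 1) 0 = gaussBranch k 1 := by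
    simp [gaussBranch]
  have hweight (k : ℕ) : 2 * gaussWeight (k + 1) 0 = gaussWeight k 1 := by
    simp only [gaussWeight]
    push_cast
    field_simp
    ring
  have hsplit := (summable_gaussWeight_mul hf (by simp : (0 : ℝ) ∈ Set.Icc (0 : ℝ) 1)
    (by simp : (0 : ℝ) ∈ Set.Icc (0 : ℝ) 1)).tsum_eq_zero_add
  have hfirst : 2 * (gaussWeight 0 0 * f (gaussBranch 0 0)) = f 1 := by
    simp [gaussWeight, gaussBranch]
  simp only [gaussTransfer, hsplit, mul_add, hfirst, ← tsum_mul_left, ← mul_assoc, hbranch,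
    hweight]

section Monotone

variable {f : ℝ → ℝ} (hf : MonotoneOn f (Set.Icc 0 1))
include hf

theorem abs_le_mul_sqrt_inv_of_monotoneOn (t : ℝ) (ht : t ∈ Set.Ioc (0 : ℝ) 1) :
    |f t| ≤ max |f 0| |f 1| * √t⁻¹ :=
  abs_le_mul_sqrt_inv_of_abs_le (fun _ hs => abs_le_max_abs_abs
    (hf (by simp) (Set.Ioc_subset_Icc_self hs) hs.1.le)
    (hf (Set.Ioc_subset_Icc_self hs) (by simp) hs.2)) t ht

theorem monotoneOn_neg_gaussTransfer : MonotoneOn (-gaussTransfer f) (Set.Icc 0 1) := by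
  rw [← gaussTransfer_neg]
  refine monotoneOn_gaussTransfer (C := max |f 0| |f 1|) (fun t ht => ?_)
    (hf.mono Set.Ioc_subset_Icc_self).neg
  rw [Pi.neg_apply, abs_neg]
  exact abs_le_mul_sqrt_inv_of_monotoneOn hf t ht

theorem gaussTransfer_zero_sub_gaussTransfer_one_le :
    gaussTransfer f 0 - gaussTransfer f 1 ≤ (f 1 - f 0) / 2 := by
  have htwo := two_mul_gaussTransfer_zero (abs_le_mul_sqrt_inv_of_monotoneOn hf)
  have hlower : f 0 ≤ gaussTransfer f 1 := by
    have hneg := gaussTransfer_le_of_le (f := -f) (C := -f 0)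
      (fun t ht => (abs_neg (f t)).trans_le (abs_le_mul_sqrt_inv_of_monotoneOn hf t ht))
      (fun t ht => neg_le_neg (hf (by simp) (Set.Ioc_subset_Icc_self ht) ht.1.le))
      (by simp : (1 : ℝ) ∈ Set.Icc (0 : ℝ) 1)
    rw [gaussTransfer_neg] at hneg
    exact neg_le_neg_iff.mp hneg
  linarith

end Monotone

/-! ### The Gauss measure -/

/-- The density of the Gauss measure on `[0, 1)`. -/
noncomputable def gaussDensity (x : ℝ) : ℝ := 1 / ((1 + x) * log 2)

/-- The Gauss measure, i.e. the probability measure on `[0, 1)`, seen as a measure on `ℝ`, with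
density `gaussDensity`; it is invariant under `gaussMap`. -/
noncomputable def gaussMeasure : Measure ℝ :=
  (volume.restrict (Set.Ico 0 1)).withDensity fun x => ENNReal.ofReal (gaussDensity x)

theorem measurable_gaussDensity : Measurable gaussDensity := by
  unfold gaussDensity
  fun_prop

theorem gaussDensity_pos {x : ℝ} (hx : x ∈ Set.Ico (0 : ℝ) 1) : 0 < gaussDensity x :=
  one_div_pos.mpr (mul_pos (by linarith [hx.1]) (log_pos one_lt_two))

theorem gaussDensity_le {x : ℝ} (hx : x ∈ Set.Ico (0 : ℝ) 1) : gaussDensity x ≤ 1 / log 2 :=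
  one_div_le_one_div_of_le (log_pos one_lt_two)
    (le_mul_of_one_le_left (log_pos one_lt_two).le (by linarith [hx.1]))

theorem ae_gaussMeasure_mem_Ico : ∀ᵐ x ∂gaussMeasure, x ∈ Set.Ico (0 : ℝ) 1 :=
  (withDensity_absolutelyContinuous _ _).ae_le (ae_restrict_mem measurableSet_Ico)

theorem volume_restrict_absolutelyContinuous_gaussMeasure :
    volume.restrict (Set.Ico (0 : ℝ) 1) ≪ gaussMeasure := by
  refine withDensity_absolutelyContinuous' measurable_gaussDensity.ennreal_ofReal.aemeasurable ?_
  filter_upwards [ae_restrict_mem measurableSet_Ico] with x hx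
  exact (ENNReal.ofReal_pos.mpr (gaussDensity_pos hx)).ne'

theorem gaussMeasure_le :
    gaussMeasure ≤ ENNReal.ofReal (1 / log 2) • volume.restrict (Set.Ico 0 1) := by
  rw [gaussMeasure, ← withDensity_const]
  refine withDensity_mono ?_
  filter_upwards [ae_restrict_mem measurableSet_Ico] with x hx
  exact ENNReal.ofReal_le_ofReal (gaussDensity_le hx)

theorem integral_gaussMeasure (f : ℝ → ℝ) :
    ∫ x, f x ∂gaussMeasure = ∫ x in Set.Ico 0 1, gaussDensity x * f x := by
  rw [gaussMeasure, integral_withDensity_eq_integral_toReal_smul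
    measurable_gaussDensity.ennreal_ofReal (ae_of_all _ fun _ => ENNReal.ofReal_lt_top)]
  refine setIntegral_congr_fun measurableSet_Ico fun x hx => ?_
  simp only [ENNReal.toReal_ofReal (gaussDensity_pos hx).le, smul_eq_mul]

theorem integrable_gaussMeasure_iff {f : ℝ → ℝ} :
    Integrable f gaussMeasure ↔ IntegrableOn (fun x => gaussDensity x * f x) (Set.Ico 0 1) := by
  rw [gaussMeasure, integrable_withDensity_iff_integrable_smul'
    measurable_gaussDensity.ennreal_ofReal (ae_of_all _ fun _ => ENNReal.ofReal_lt_top)]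
  refine integrableOn_congr_fun (fun x hx => ?_) measurableSet_Ico
  simp only [ENNReal.toReal_ofReal (gaussDensity_pos hx).le, smul_eq_mul]

theorem integral_gaussMeasure_eq_intervalIntegral (f : ℝ → ℝ) :
    ∫ x, f x ∂gaussMeasure = (∫ x in (0 : ℝ)..1, f x / (1 + x)) / log 2 := by
  rw [integral_gaussMeasure, integral_Ico_eq_integral_Ioc,
    ← intervalIntegral.integral_of_le zero_le_one, ← intervalIntegral.integral_div]
  congr 1 with x
  rw [gaussDensity, one_div_mul_eq_div, div_div]

instance : IsProbabilityMeasure gaussMeasure := by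
  have : IsFiniteMeasure gaussMeasure :=
    have := (volume.restrict (Set.Ico (0 : ℝ) 1)).smul_finite
      (ENNReal.ofReal_ne_top (r := 1 / log 2))
    isFiniteMeasure_of_le _ gaussMeasure_le
  have hmass : ∫ _, (1 : ℝ) ∂gaussMeasure = 1 := by
    have hint : ∫ x in (0 : ℝ)..1, 1 / (1 + x) = log 2 := by
      rw [intervalIntegral.integral_comp_add_left (fun x => 1 / x), integral_one_div] <;> norm_num
    rw [integral_gaussMeasure_eq_intervalIntegral, hint,
      div_self (log_pos one_lt_two).ne']
  refine ⟨(ENNReal.toReal_eq_one_iff _).mp ?_⟩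
  simpa [Measure.real] using hmass

/-! ### Invariance and duality -/

theorem measurable_gaussMap : Measurable gaussMap :=
  measurable_fract.comp measurable_inv

theorem gaussMap_gaussBranch (k : ℕ) {y : ℝ} (hy : y ∈ Set.Ico (0 : ℝ) 1) :
    gaussMap (gaussBranch k y) = y := by
  have hcast : (k + 1 + y : ℝ) = y + (k + 1 : ℕ) := by push_cast; ring
  rw [gaussMap, gaussBranch, inv_inv, hcast, Int.fract_add_natCast, Int.fract_eq_self.mpr hy]

theorem injOn_gaussBranch (k : ℕ) : Set.InjOn (gaussBranch k) (Set.Ico 0 1) :=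
  Set.LeftInvOn.injOn fun _ hy => gaussMap_gaussBranch k hy

theorem iUnion_image_gaussBranch :
    ⋃ k : ℕ, gaussBranch k '' Set.Ico 0 1 = Set.Ioc (0 : ℝ) 1 := by
  refine Set.Subset.antisymm ?_ fun x hx => ?_
  · rw [Set.iUnion_subset_iff]
    rintro k _ ⟨y, hy, rfl⟩
    exact gaussBranch_mem_Ioc k hy.1
  · have hinv : 1 ≤ x⁻¹ := (one_le_inv₀ hx.1).mpr hx.2
    have hfloor : 1 ≤ ⌊x⁻¹⌋₊ := Nat.le_floor (mod_cast hinv)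
    refine Set.mem_iUnion.mpr ⟨⌊x⁻¹⌋₊ - 1, x⁻¹ - ⌊x⁻¹⌋₊, ⟨?_, ?_⟩, ?_⟩
    · exact sub_nonneg.mpr (Nat.floor_le (zero_le_one.trans hinv))
    · exact sub_lt_iff_lt_add'.mpr (Nat.lt_floor_add_one x⁻¹)
    · rw [gaussBranch, Nat.cast_sub hfloor, Nat.cast_one, sub_add_cancel, add_sub_cancel, inv_inv]

theorem pairwise_disjoint_image_gaussBranch :
    Pairwise (Function.onFun Disjoint fun k => gaussBranch k '' Set.Ico 0 1) := by
  refine fun i j hij => Set.disjoint_left.mpr ?_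
  rintro _ ⟨x, hx, rfl⟩ ⟨y, hy, hyx⟩
  obtain rfl : y = x := by rw [← gaussMap_gaussBranch j hy, hyx, gaussMap_gaussBranch i hx]
  have hcast : (j + 1 + y : ℝ) = i + 1 + y := inv_injective hyx
  exact hij (by exact_mod_cast (add_right_cancel (add_right_cancel hcast)).symm)

theorem hasDerivWithinAt_gaussBranch (k : ℕ) {y : ℝ} (hy : y ∈ Set.Ico (0 : ℝ) 1) :
    HasDerivWithinAt (gaussBranch k) (-((k + 1 + y) ^ 2)⁻¹) (Set.Ico 0 1) y := by
  have hne : (k + 1 + y : ℝ) ≠ 0 := by linarith [hy.1, k.cast_nonneg (α := ℝ)]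
  have hderiv := ((hasDerivAt_id y).const_add (k + 1 : ℝ)).inv hne
  rw [neg_div, one_div] at hderiv
  exact hderiv.hasDerivWithinAt

theorem measurableSet_image_gaussBranch (k : ℕ) :
    MeasurableSet (gaussBranch k '' Set.Ico 0 1) :=
  measurableSet_Ico.image_of_continuousOn_injOn
    (fun _ hy => (hasDerivWithinAt_gaussBranch k hy).continuousWithinAt) (injOn_gaussBranch k)

theorem abs_deriv_mul_gaussDensity_gaussBranch (k : ℕ) {y : ℝ} (hy : y ∈ Set.Ico (0 : ℝ) 1) :
    |-((k + 1 + y) ^ 2)⁻¹| * gaussDensity (gaussBranch k y) =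
      gaussDensity y * gaussWeight k y := by
  have hy0 := hy.1
  rw [abs_neg, abs_of_nonneg (by positivity), gaussDensity, gaussDensity, gaussWeight,
    gaussBranch]
  field_simp
  ring

theorem setIntegral_image_gaussBranch (k : ℕ) (f : ℝ → ℝ) :
    ∫ x in gaussBranch k '' Set.Ico 0 1, gaussDensity x * f x =
      ∫ x, gaussWeight k x * f (gaussBranch k x) ∂gaussMeasure := by
  rw [integral_image_eq_integral_abs_deriv_smul measurableSet_Ico
    (fun _ hy => hasDerivWithinAt_gaussBranch k hy) (injOn_gaussBranch k), integral_gaussMeasure]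
  refine setIntegral_congr_fun measurableSet_Ico fun y hy => ?_
  simp only [smul_eq_mul, ← mul_assoc, abs_deriv_mul_gaussDensity_gaussBranch k hy]

theorem integrableOn_image_gaussBranch_iff (k : ℕ) {f : ℝ → ℝ} :
    IntegrableOn (fun x => gaussDensity x * f x) (gaussBranch k '' Set.Ico 0 1) ↔
      Integrable (fun x => gaussWeight k x * f (gaussBranch k x)) gaussMeasure := by
  rw [integrableOn_image_iff_integrableOn_abs_deriv_smul measurableSet_Ico
    (fun _ hy => hasDerivWithinAt_gaussBranch k hy) (injOn_gaussBranch k),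
    integrable_gaussMeasure_iff]
  refine integrableOn_congr_fun (fun y hy => ?_) measurableSet_Ico
  simp only [smul_eq_mul, ← mul_assoc, abs_deriv_mul_gaussDensity_gaussBranch k hy]

section Duality

variable {f g : ℝ → ℝ}

theorem integrableOn_iUnion_image_gaussBranch (hf : Integrable f gaussMeasure) :
    IntegrableOn (fun x => gaussDensity x * f x) (⋃ k : ℕ, gaussBranch k '' Set.Ico 0 1) := by
  rw [iUnion_image_gaussBranch, integrableOn_Ioc_iff_integrableOn_Ioo,
    ← integrableOn_Ico_iff_integrableOn_Ioo]
  exact integrable_gaussMeasure_iff.mp hf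

theorem integrable_gaussWeight_mul_comp_gaussBranch (hf : Integrable f gaussMeasure) (k : ℕ) :
    Integrable (fun x => gaussWeight k x * f (gaussBranch k x)) gaussMeasure :=
  (integrableOn_image_gaussBranch_iff k).mp <|
    (integrableOn_iUnion_image_gaussBranch hf).mono_set (Set.subset_iUnion_of_subset k subset_rfl)

theorem hasSum_integral_gaussWeight_mul_comp_gaussBranch (hf : Integrable f gaussMeasure) :
    HasSum (fun k => ∫ x, gaussWeight k x * f (gaussBranch k x) ∂gaussMeasure)
      (∫ x, f x ∂gaussMeasure) := by
  have hsum := hasSum_integral_iUnion measurableSet_image_gaussBranch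
    pairwise_disjoint_image_gaussBranch (integrableOn_iUnion_image_gaussBranch hf)
  rw [iUnion_image_gaussBranch, ← integral_Ico_eq_integral_Ioc, ← integral_gaussMeasure] at hsum
  simpa only [setIntegral_image_gaussBranch] using hsum

theorem integral_gaussTransfer (hf : Integrable f gaussMeasure) :
    ∫ x, gaussTransfer f x ∂gaussMeasure = ∫ x, f x ∂gaussMeasure := by
  have hnorm (k : ℕ) : ∫ x, ‖gaussWeight k x * f (gaussBranch k x)‖ ∂gaussMeasure =
      ∫ x, gaussWeight k x * |f (gaussBranch k x)| ∂gaussMeasure := by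
    refine integral_congr_ae ?_
    filter_upwards [ae_gaussMeasure_mem_Ico] with x hx
    rw [norm_mul, norm_of_nonneg (gaussWeight_nonneg k hx.1), norm_eq_abs]
  refine (hasSum_integral_of_summable_integral_norm
    (integrable_gaussWeight_mul_comp_gaussBranch hf) ?_).unique
      (hasSum_integral_gaussWeight_mul_comp_gaussBranch hf)
  simpa only [hnorm] using (hasSum_integral_gaussWeight_mul_comp_gaussBranch hf.abs).summable

theorem gaussTransfer_mul_comp_gaussMap {x : ℝ} (hx : x ∈ Set.Ico (0 : ℝ) 1) :
    gaussTransfer (fun t => f t * g (gaussMap t)) x = gaussTransfer f x * g x := by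
  simp only [gaussTransfer, gaussMap_gaussBranch _ hx, ← mul_assoc, tsum_mul_right]

theorem integral_mul_comp_gaussMap
    (hfg : Integrable (fun x => f x * g (gaussMap x)) gaussMeasure) :
    ∫ x, f x * g (gaussMap x) ∂gaussMeasure = ∫ x, gaussTransfer f x * g x ∂gaussMeasure := by
  rw [← integral_gaussTransfer hfg]
  refine integral_congr_ae ?_
  filter_upwards [ae_gaussMeasure_mem_Ico] with x hx using gaussTransfer_mul_comp_gaussMap hx

end Duality

theorem gaussTransfer_one {x : ℝ} (hx : 0 ≤ x) : gaussTransfer (fun _ => 1) x = 1 := by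
  simp only [gaussTransfer, mul_one, (hasSum_gaussWeight hx).tsum_eq]

theorem measurePreserving_gaussMap : MeasurePreserving gaussMap gaussMeasure gaussMeasure := by
  refine ⟨measurable_gaussMap, Measure.ext fun s hs => (measureReal_eq_measureReal_iff).mp ?_⟩
  have hs' := measurable_gaussMap hs
  have hcomp : (fun x => 1 * s.indicator 1 (gaussMap x)) =
      (gaussMap ⁻¹' s).indicator (1 : ℝ → ℝ) := by
    ext x
    rw [one_mul, ← Set.indicator_comp_right]
    rfl
  have hdual := integral_mul_comp_gaussMap (f := fun _ => 1) (g := s.indicator 1)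
    (hcomp ▸ (integrable_const (1 : ℝ)).indicator hs')
  rw [map_measureReal_apply measurable_gaussMap hs, ← integral_indicator_one hs,
    ← integral_indicator_one hs', ← hcomp, hdual]
  refine integral_congr_ae ?_
  filter_upwards [ae_gaussMeasure_mem_Ico] with x hx
  rw [gaussTransfer_one hx.1, one_mul]

/-! ### Decay of correlations -/

section Decay

variable {f g : ℝ → ℝ} (hf : MonotoneOn f (Set.Icc 0 1))
include hf

theorem ae_gaussMeasure_mem_Icc_of_monotoneOn :
    ∀ᵐ x ∂gaussMeasure, f x ∈ Set.Icc (f 0) (f 1) := by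
  filter_upwards [ae_gaussMeasure_mem_Ico] with x hx
  exact hf.mapsTo_Icc (Set.Ico_subset_Icc_self hx)

theorem aestronglyMeasurable_gaussMeasure_of_monotoneOn :
    AEStronglyMeasurable f gaussMeasure := by
  have hmem : ∀ᵐ x ∂gaussMeasure, x ∈ Set.Icc (0 : ℝ) 1 :=
    ae_gaussMeasure_mem_Ico.mono fun _ hx => Set.Ico_subset_Icc_self hx
  rw [← Measure.restrict_eq_self_of_ae_mem hmem]
  exact (aemeasurable_restrict_of_monotoneOn measurableSet_Icc hf).aestronglyMeasurable

theorem integrable_gaussMeasure_of_monotoneOn : Integrable f gaussMeasure :=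
  .of_mem_Icc _ _ (aestronglyMeasurable_gaussMeasure_of_monotoneOn hf).aemeasurable
    (ae_gaussMeasure_mem_Icc_of_monotoneOn hf)

theorem integrable_mul_gaussMeasure_of_monotoneOn (hg : Integrable g gaussMeasure) :
    Integrable (fun x => f x * g x) gaussMeasure :=
  hg.bdd_mul (aestronglyMeasurable_gaussMeasure_of_monotoneOn hf) <|
    (ae_gaussMeasure_mem_Icc_of_monotoneOn hf).mono fun _ hx => abs_le_max_abs_abs hx.1 hx.2

theorem abs_integral_mul_sub_le_of_monotoneOn (hg : Integrable g gaussMeasure) :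
    |∫ x, f x * g x ∂gaussMeasure - (∫ x, f x ∂gaussMeasure) * ∫ x, g x ∂gaussMeasure| ≤
      (f 1 - f 0) * ∫ x, |g x| ∂gaussMeasure := by
  set c := ∫ x, f x ∂gaussMeasure
  have hmem := ae_gaussMeasure_mem_Icc_of_monotoneOn hf
  have hint := integrable_gaussMeasure_of_monotoneOn hf
  have hlower : f 0 ≤ c := by
    simpa using integral_mono_ae (integrable_const _) hint (hmem.mono fun _ hx => hx.1)
  have hupper : c ≤ f 1 := by
    simpa using integral_mono_ae hint (integrable_const _) (hmem.mono fun _ hx => hx.2)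
  rw [← norm_eq_abs, ← integral_const_mul, ← integral_const_mul,
    ← integral_sub (integrable_mul_gaussMeasure_of_monotoneOn hf hg) (hg.const_mul c)]
  refine norm_integral_le_of_norm_le (hg.abs.const_mul (f 1 - f 0)) (hmem.mono fun x hx => ?_)
  rw [← sub_mul, norm_mul, norm_eq_abs, norm_eq_abs]
  refine mul_le_mul_of_nonneg_right ?_ (abs_nonneg _)
  exact abs_sub_le_iff.mpr ⟨by linarith [hx.2], by linarith [hx.1]⟩

end Decay

theorem abs_integral_mul_comp_iterate_gaussMap_sub_le {f g : ℝ → ℝ}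
    (hf : MonotoneOn f (Set.Icc 0 1)) (hg : Integrable g gaussMeasure) (n : ℕ) :
    |∫ x, f x * g (gaussMap^[n] x) ∂gaussMeasure -
        (∫ x, f x ∂gaussMeasure) * ∫ x, g x ∂gaussMeasure| ≤
      (f 1 - f 0) / 2 ^ n * ∫ x, |g x| ∂gaussMeasure := by
  induction n generalizing f with
  | zero => simpa using abs_integral_mul_sub_le_of_monotoneOn hf hg
  | succ n ih =>
    have hcomp := (measurePreserving_gaussMap.iterate (n + 1)).integrable_comp_of_integrable hg
    have hdual : ∫ x, f x * g (gaussMap^[n + 1] x) ∂gaussMeasure =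
        ∫ x, gaussTransfer f x * g (gaussMap^[n] x) ∂gaussMeasure := by
      have hint := integrable_mul_gaussMeasure_of_monotoneOn hf hcomp
      simp only [Function.comp_apply, Function.iterate_succ_apply] at hint ⊢
      exact integral_mul_comp_gaussMap (g := fun x => g (gaussMap^[n] x)) hint
    have htransfer := ih (monotoneOn_neg_gaussTransfer hf)
    simp only [Pi.neg_apply, neg_mul, integral_neg, neg_sub_neg, ← hdual,
      integral_gaussTransfer (integrable_gaussMeasure_of_monotoneOn hf)] at htransfer
    rw [abs_sub_comm]
    refine htransfer.trans (mul_le_mul_of_nonneg_right ?_ (integral_nonneg fun _ => abs_nonneg _))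
    rw [pow_succ', ← div_div]
    exact div_le_div_of_nonneg_right (gaussTransfer_zero_sub_gaussTransfer_one_le hf)
      (by positivity)

/-! ### A law of large numbers for summable correlations -/

section LawOfLargeNumbers

open ProbabilityTheory

variable {Ω : Type*} [MeasurableSpace Ω] {μ : Measure Ω}

theorem ae_tendsto_sub_integral_of_summable_variance [IsFiniteMeasure μ] {X : ℕ → Ω → ℝ}
    (hX : ∀ n, MemLp (X n) 2 μ) (hsum : Summable fun n => Var[X n; μ]) :
    ∀ᵐ ω ∂μ, Tendsto (fun n => X n ω - ∫ ω', X n ω' ∂μ) atTop (𝓝 0) := by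
  have hmeas n : AEMeasurable (fun ω => ENNReal.ofReal ((X n ω - ∫ ω', X n ω' ∂μ) ^ 2)) μ :=
    (((hX n).aestronglyMeasurable.aemeasurable.sub_const _).pow_const 2).ennreal_ofReal
  have hfin : ∫⁻ ω, ∑' n, ENNReal.ofReal ((X n ω - ∫ ω', X n ω' ∂μ) ^ 2) ∂μ ≠ ⊤ := by
    rw [lintegral_tsum hmeas]
    simp_rw [← evariance_eq_lintegral_ofReal, ← ofReal_variance (hX _)]
    exact hsum.tsum_ofReal_ne_top
  filter_upwards [ae_lt_top' (AEMeasurable.tsum hmeas) hfin] with ω hω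
  have hsq : Tendsto (fun n => (X n ω - ∫ ω', X n ω' ∂μ) ^ 2) atTop (𝓝 0) := by
    simpa [Function.comp_def, ENNReal.toReal_ofReal, sq_nonneg] using
      (ENNReal.tendsto_toReal ENNReal.zero_ne_top).comp
        (ENNReal.tendsto_atTop_zero_of_tsum_ne_top hω.ne)
  refine (tendsto_zero_iff_abs_tendsto_zero _).mpr ?_
  simpa [sqrt_sq_eq_abs, Function.comp_def] using hsq.sqrt

theorem tendsto_div_of_monotone_of_tendsto_div_sq {u : ℕ → ℝ} {l : ℝ} (hu : Monotone u)
    (hl : Tendsto (fun k : ℕ => u (k ^ 2) / (k ^ 2 : ℕ)) atTop (𝓝 l)) :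
    Tendsto (fun n => u n / n) atTop (𝓝 l) := by
  refine tendsto_div_of_monotone_of_exists_subseq_tendsto_div u l hu fun a ha =>
    ⟨fun k => k ^ 2, ?_, tendsto_pow_atTop two_ne_zero, hl⟩
  have hlarge : ∀ᶠ k : ℕ in atTop, 3 / (a - 1) ≤ k :=
    tendsto_natCast_atTop_atTop.eventually_ge_atTop _
  filter_upwards [hlarge, eventually_ge_atTop 1] with k hk hk1
  have hk1' : (1 : ℝ) ≤ k := by exact_mod_cast hk1
  rw [div_le_iff₀ (by linarith)] at hk
  push_cast
  nlinarith

variable {T : Ω → Ω} {φ : Ω → ℝ}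

theorem memLp_birkhoffSum {p : ENNReal} (hT : MeasurePreserving T μ μ) (hφ : MemLp φ p μ) (n : ℕ) :
    MemLp (birkhoffSum T φ n) p μ :=
  memLp_finsetSum _ fun k _ => hφ.comp_measurePreserving (hT.iterate k)

theorem integral_comp_iterate (hT : MeasurePreserving T μ μ) (hφ : AEStronglyMeasurable φ μ)
    (k : ℕ) : ∫ x, φ (T^[k] x) ∂μ = ∫ x, φ x ∂μ := by
  have hmap := (hT.iterate k).map_eq
  rw [← integral_map (hT.iterate k).aemeasurable (by rwa [hmap]), hmap]

theorem integral_birkhoffAverage (hT : MeasurePreserving T μ μ) (hφ : Integrable φ μ) {n : ℕ}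
    (hn : n ≠ 0) : ∫ x, birkhoffAverage ℝ T φ n x ∂μ = ∫ x, φ x ∂μ := by
  simp only [birkhoffAverage, birkhoffSum, integral_smul]
  rw [integral_finsetSum _ fun k _ => ?_]
  · simp [integral_comp_iterate hT hφ.aestronglyMeasurable, hn]
  · exact (hT.iterate k).integrable_comp_of_integrable hφ

theorem variance_birkhoffSum_succ [IsFiniteMeasure μ] (hT : MeasurePreserving T μ μ)
    (hφ : MemLp φ 2 μ) (n : ℕ) :
    Var[birkhoffSum T φ (n + 1); μ] =
      Var[φ; μ] + 2 * ∑ k ∈ Finset.range n, cov[φ, φ ∘ T^[k + 1]; μ] +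
        Var[birkhoffSum T φ n; μ] := by
  have hcomp k : MemLp (φ ∘ T^[k + 1]) 2 μ := hφ.comp_measurePreserving (hT.iterate (k + 1))
  have hS := memLp_birkhoffSum hT hφ n
  have hsplit : birkhoffSum T φ (n + 1) = fun x => φ x + (birkhoffSum T φ n ∘ T) x :=
    funext (birkhoffSum_succ' T φ n)
  have hsum : birkhoffSum T φ n ∘ T = ∑ k ∈ Finset.range n, φ ∘ T^[k + 1] := by
    ext x
    simp [birkhoffSum]
  rw [hsplit, variance_fun_add hφ (hS.comp_measurePreserving hT),
    show Var[birkhoffSum T φ n ∘ T; μ] = Var[birkhoffSum T φ n; μ] from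
      hT.variance_fun_comp hS.aestronglyMeasurable.aemeasurable, hsum,
    covariance_sum_right' (fun k _ => hcomp k) hφ]

theorem variance_birkhoffSum_le [IsFiniteMeasure μ] (hT : MeasurePreserving T μ μ)
    (hφ : MemLp φ 2 μ) (hsum : Summable fun k => cov[φ, φ ∘ T^[k]; μ]) (n : ℕ) :
    Var[birkhoffSum T φ n; μ] ≤ n * (2 * ∑' k, |cov[φ, φ ∘ T^[k]; μ]|) := by
  induction n with
  | zero => simp [show birkhoffSum T φ 0 = 0 from funext (birkhoffSum_zero T φ)]
  | succ n ih =>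
    have hvar : Var[φ; μ] = cov[φ, φ ∘ T^[0]; μ] :=
      (covariance_self hφ.aestronglyMeasurable.aemeasurable).symm
    have hle : Var[φ; μ] + 2 * ∑ k ∈ Finset.range n, cov[φ, φ ∘ T^[k + 1]; μ]
        ≤ 2 * ∑' k, |cov[φ, φ ∘ T^[k]; μ]| := calc
      _ ≤ 2 * ∑ k ∈ Finset.range (n + 1), cov[φ, φ ∘ T^[k]; μ] := by
        rw [Finset.sum_range_succ', ← hvar]
        linarith [variance_nonneg φ μ]
      _ ≤ 2 * ∑ k ∈ Finset.range (n + 1), |cov[φ, φ ∘ T^[k]; μ]| := by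
        gcongr
        exact le_abs_self _
      _ ≤ 2 * ∑' k, |cov[φ, φ ∘ T^[k]; μ]| := by
        gcongr
        exact hsum.abs.sum_le_tsum _ fun k _ => abs_nonneg _
    rw [variance_birkhoffSum_succ hT hφ]
    push_cast
    linarith

theorem summable_variance_birkhoffAverage_sq [IsFiniteMeasure μ] (hT : MeasurePreserving T μ μ)
    (hφ : MemLp φ 2 μ) (hsum : Summable fun k => cov[φ, φ ∘ T^[k]; μ]) :
    Summable fun k : ℕ => Var[birkhoffAverage ℝ T φ (k ^ 2); μ] := by
  refine .of_nonneg_of_le (fun k => variance_nonneg _ _) (fun k => ?_)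
    ((summable_one_div_nat_pow.mpr one_lt_two).mul_left (2 * ∑' k, |cov[φ, φ ∘ T^[k]; μ]|))
  have hsmul : birkhoffAverage ℝ T φ (k ^ 2) =
      ((k ^ 2 : ℕ) : ℝ)⁻¹ • birkhoffSum T φ (k ^ 2) := rfl
  rcases eq_or_ne k 0 with rfl | hk
  · simp
  rw [hsmul, variance_smul]
  calc _ ≤ (((k ^ 2 : ℕ) : ℝ)⁻¹) ^ 2 *
        ((k ^ 2 : ℕ) * (2 * ∑' k, |cov[φ, φ ∘ T^[k]; μ]|)) := by
        gcongr
        exact variance_birkhoffSum_le hT hφ hsum _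
    _ = _ := by
        push_cast
        field_simp

theorem ae_tendsto_birkhoffAverage_of_summable_covariance [IsFiniteMeasure μ]
    (hT : MeasurePreserving T μ μ) (hφ : MemLp φ 2 μ) (hpos : 0 ≤ᵐ[μ] φ)
    (hsum : Summable fun k => cov[φ, φ ∘ T^[k]; μ]) :
    ∀ᵐ x ∂μ, Tendsto (fun n => birkhoffAverage ℝ T φ n x) atTop (𝓝 (∫ x, φ x ∂μ)) := by
  have hlim := ae_tendsto_sub_integral_of_summable_variance
    (fun k => (memLp_birkhoffSum hT hφ (k ^ 2)).const_smul ((k ^ 2 : ℕ) : ℝ)⁻¹)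
    (summable_variance_birkhoffAverage_sq hT hφ hsum)
  have hpos' : ∀ᵐ x ∂μ, ∀ k, 0 ≤ φ (T^[k] x) :=
    ae_all_iff.mpr fun k => (hT.iterate k).quasiMeasurePreserving.ae hpos
  filter_upwards [hlim, hpos'] with x hx hφx
  have hmono : Monotone fun n => birkhoffSum T φ n x :=
    monotone_nat_of_le_succ fun n => by simpa [birkhoffSum_succ] using hφx n
  simp only [birkhoffAverage, smul_eq_mul, inv_mul_eq_div]
  refine tendsto_div_of_monotone_of_tendsto_div_sq hmono ?_
  refine tendsto_sub_nhds_zero_iff.mp (hx.congr' ?_)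
  filter_upwards [eventually_ne_atTop 0] with k hk
  have hint := integral_birkhoffAverage hT (hφ.integrable one_le_two) (pow_ne_zero 2 hk)
  simp only [birkhoffAverage, smul_eq_mul, inv_mul_eq_div, Pi.smul_apply] at hint ⊢
  rw [hint]

end LawOfLargeNumbers

/-! ### The integral of `-log` -/

theorem intervalIntegrable_pow_mul_neg_log (k : ℕ) :
    IntervalIntegrable (fun x : ℝ => x ^ k * -log x) volume 0 1 :=
  intervalIntegral.intervalIntegrable_log'.neg.continuousOn_mul (by fun_prop)

theorem integral_pow_mul_neg_log (k : ℕ) :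
    ∫ x in (0 : ℝ)..1, x ^ k * -log x = 1 / ((k : ℝ) + 1) ^ 2 := by
  rw [intervalIntegral.integral_eq_sub_of_hasDerivAt_of_le zero_le_one
    (f := fun x => x ^ (k + 1) / ((k : ℝ) + 1) ^ 2 - x ^ k * (x * log x) / ((k : ℝ) + 1))]
  · simp
  · have := continuous_mul_log
    fun_prop
  · intro x hx
    have hpow : HasDerivAt (fun x : ℝ => x ^ (k + 1)) ((k + 1) * x ^ k) x := by
      simpa using hasDerivAt_pow (k + 1) x
    have hderiv := (hpow.div_const (((k : ℝ) + 1) ^ 2)).sub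
      ((hpow.mul (hasDerivAt_log hx.1.ne')).div_const ((k : ℝ) + 1))
    refine (hderiv.congr_deriv ?_).congr_of_eventuallyEq (.of_forall fun y => ?_)
    · have hx0 : x ≠ 0 := hx.1.ne'
      field_simp
      ring
    · simp only [Pi.sub_apply, Pi.mul_apply]
      ring
  · exact intervalIntegrable_pow_mul_neg_log k

theorem hasSum_neg_one_pow_div_succ_sq :
    HasSum (fun k : ℕ => (-1 : ℝ) ^ k * (1 / ((k : ℝ) + 1) ^ 2)) (π ^ 2 / 12) := by
  have hbernoulli : bernoulliFun 2 2⁻¹ = -(1 / 12) := by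
    rw [bernoulliFun_eval_half, bernoulli_two]
    norm_num
  have hcos := hasSum_one_div_nat_pow_mul_cos one_ne_zero (x := 2⁻¹) (by norm_num)
  have hshift := ((hasSum_nat_add_iff' 1).mpr hcos).neg
  convert! hshift using 1
  · ext k
    rw [show 2 * π * ((k + 1 : ℕ) : ℝ) * 2⁻¹ = (k + 1 : ℕ) * π by ring, cos_nat_mul_pi]
    push_cast
    ring
  · rw [mul_one, ← bernoulliFun, hbernoulli]
    norm_num
    ring

theorem hasSum_neg_one_pow_mul_pow_mul {x : ℝ} (hx : |x| < 1) (c : ℝ) :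
    HasSum (fun k : ℕ => (-1 : ℝ) ^ k * (x ^ k * c)) (c / (1 + x)) := by
  have hgeom := (hasSum_geometric_of_abs_lt_one (r := -x) (by rwa [abs_neg])).mul_right c
  simpa only [neg_pow x, mul_assoc, sub_neg_eq_add, inv_mul_eq_div] using hgeom

theorem integral_neg_log_div_one_add :
    ∫ x in (0 : ℝ)..1, -log x / (1 + x) = π ^ 2 / 12 := by
  have hterm (k : ℕ) : ∫ x in Set.Ioc (0 : ℝ) 1, x ^ k * -log x = 1 / ((k : ℝ) + 1) ^ 2 := by
    rw [← intervalIntegral.integral_of_le zero_le_one, integral_pow_mul_neg_log]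
  have hint (k : ℕ) : IntegrableOn (fun x => (-1 : ℝ) ^ k * (x ^ k * -log x)) (Set.Ioc 0 1) :=
    ((intervalIntegrable_iff_integrableOn_Ioc_of_le zero_le_one).mp
      (intervalIntegrable_pow_mul_neg_log k)).const_mul _
  have hnorm (k : ℕ) : ∫ x in Set.Ioc (0 : ℝ) 1, ‖(-1 : ℝ) ^ k * (x ^ k * -log x)‖ =
      1 / ((k : ℝ) + 1) ^ 2 := by
    rw [← hterm k]
    refine setIntegral_congr_fun measurableSet_Ioc fun x hx => ?_
    have hlog : 0 ≤ -log x := neg_nonneg.mpr (log_nonpos hx.1.le hx.2)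
    rw [norm_mul, norm_pow, norm_neg, norm_one, one_pow, one_mul,
      norm_of_nonneg (mul_nonneg (pow_nonneg hx.1.le k) hlog)]
  have hseries : ∀ᵐ x ∂volume.restrict (Set.Ioc (0 : ℝ) 1),
      ∑' k : ℕ, (-1 : ℝ) ^ k * (x ^ k * -log x) = -log x / (1 + x) := by
    filter_upwards [ae_restrict_mem measurableSet_Ioc,
      Measure.ae_ne (volume.restrict (Set.Ioc (0 : ℝ) 1)) 1] with x hx hx1
    exact (hasSum_neg_one_pow_mul_pow_mul
      (abs_lt.mpr ⟨by linarith [hx.1], lt_of_le_of_ne hx.2 hx1⟩) _).tsum_eq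
  have hsum := hasSum_integral_of_summable_integral_norm hint <| by
    simp_rw [hnorm]
    exact_mod_cast (summable_nat_add_iff 1).mpr hasSum_zeta_two.summable
  simp_rw [integral_const_mul, hterm] at hsum
  rw [intervalIntegral.integral_of_le zero_le_one, ← integral_congr_ae hseries]
  exact hsum.unique hasSum_neg_one_pow_div_succ_sq

theorem integral_neg_log_gaussMeasure :
    ∫ x, -log x ∂gaussMeasure = π ^ 2 / (12 * log 2) := by
  rw [integral_gaussMeasure_eq_intervalIntegral, integral_neg_log_div_one_add, div_div]

theorem log_sq_le_mul_rpow {t : ℝ} (ht : t ∈ Set.Ioc (0 : ℝ) 1) :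
    log t ^ 2 ≤ 16 * t ^ (-(1 / 2) : ℝ) := by
  have hlog : |log t * t ^ (1 / 4 : ℝ)| < 1 / (1 / 4) :=
    abs_log_mul_self_rpow_lt t (1 / 4) ht.1 ht.2 (by norm_num)
  have hsq : (t ^ (1 / 4 : ℝ)) ^ 2 = t ^ (1 / 2 : ℝ) := by
    rw [← rpow_natCast, ← rpow_mul ht.1.le]
    norm_num
  rw [rpow_neg ht.1.le, ← div_eq_mul_inv, le_div_iff₀ (rpow_pos_of_pos ht.1 _), ← hsq, ← mul_pow,
    ← sq_abs]
  nlinarith [abs_nonneg (log t * t ^ (1 / 4 : ℝ))]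

theorem memLp_two_log_volume_restrict : MemLp log 2 (volume.restrict (Set.Ico (0 : ℝ) 1)) := by
  rw [memLp_two_iff_integrable_sq measurable_log.aestronglyMeasurable, restrict_Ico_eq_restrict_Ioc]
  have hbound : IntegrableOn (fun t : ℝ => 16 * t ^ (-(1 / 2) : ℝ)) (Set.Ioc 0 1) :=
    (intervalIntegrable_iff_integrableOn_Ioc_of_le zero_le_one).mp
      ((intervalIntegral.intervalIntegrable_rpow' (by norm_num)).const_mul 16)
  refine hbound.mono' (measurable_log.pow_const 2).aestronglyMeasurable ?_
  filter_upwards [ae_restrict_mem measurableSet_Ioc] with t ht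
  rw [norm_of_nonneg (sq_nonneg _)]
  exact log_sq_le_mul_rpow ht

theorem memLp_two_neg_log_gaussMeasure : MemLp (fun x => -log x) 2 gaussMeasure :=
  (memLp_two_log_volume_restrict.of_measure_le_smul ENNReal.ofReal_ne_top gaussMeasure_le).neg

/-! ### Birkhoff averages of `-log` and Lévy's constant -/

section Covariance

open ProbabilityTheory

theorem covariance_comp_iterate_gaussMap_succ {f g : ℝ → ℝ} (hf : MemLp f 2 gaussMeasure)
    (hg : MemLp g 2 gaussMeasure) (n : ℕ) :
    cov[f, g ∘ gaussMap^[n + 1]; gaussMeasure] =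
      ∫ x, gaussTransfer f x * g (gaussMap^[n] x) ∂gaussMeasure -
        (∫ x, gaussTransfer f x ∂gaussMeasure) * ∫ x, g x ∂gaussMeasure := by
  have hcomp : MemLp (g ∘ gaussMap^[n + 1]) 2 gaussMeasure :=
    hg.comp_measurePreserving (measurePreserving_gaussMap.iterate (n + 1))
  have hdual : ∫ x, f x * g (gaussMap^[n + 1] x) ∂gaussMeasure =
      ∫ x, gaussTransfer f x * g (gaussMap^[n] x) ∂gaussMeasure :=
    integral_mul_comp_gaussMap (g := g ∘ gaussMap^[n]) (hf.integrable_mul hcomp)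
  rw [covariance_eq_sub hf hcomp, integral_gaussTransfer (hf.integrable one_le_two)]
  simp only [Pi.mul_apply, Function.comp_apply, hdual,
    integral_comp_iterate measurePreserving_gaussMap hg.aestronglyMeasurable]

theorem antitoneOn_neg_log : AntitoneOn (fun x => -log x) (Set.Ioc 0 1) :=
  fun _ ha _ _ hab => neg_le_neg (log_le_log ha.1 hab)

theorem monotoneOn_gaussTransfer_neg_log :
    MonotoneOn (gaussTransfer fun x => -log x) (Set.Icc 0 1) :=
  monotoneOn_gaussTransfer (fun t ht => abs_neg_log_le_two_mul_sqrt_inv t ht) antitoneOn_neg_log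

theorem summable_covariance_neg_log_iterate :
    Summable fun n =>
      cov[fun x => -log x, (fun x => -log x) ∘ gaussMap^[n]; gaussMeasure] := by
  set φ : ℝ → ℝ := fun x => -log x
  have hφ : MemLp φ 2 gaussMeasure := memLp_two_neg_log_gaussMeasure
  have hdecay (n : ℕ) : |cov[φ, φ ∘ gaussMap^[n + 1]; gaussMeasure]| ≤
      (gaussTransfer φ 1 - gaussTransfer φ 0) * (∫ x, |φ x| ∂gaussMeasure) * (1 / 2) ^ n := by
    rw [covariance_comp_iterate_gaussMap_succ hφ hφ]
    refine (abs_integral_mul_comp_iterate_gaussMap_sub_le (g := φ) monotoneOn_gaussTransfer_neg_log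
      (hφ.integrable one_le_two) n).trans_eq ?_
    rw [one_div, inv_pow]
    ring
  refine (summable_nat_add_iff 1).mp (Summable.of_norm_bounded ?_ hdecay)
  exact (summable_geometric_of_lt_one (by norm_num) (by norm_num)).mul_left _

theorem ae_tendsto_birkhoffAverage_neg_log :
    ∀ᵐ x ∂gaussMeasure, Tendsto (fun n => birkhoffAverage ℝ gaussMap (fun t => -log t) n x) atTop
      (𝓝 (π ^ 2 / (12 * log 2))) := by
  have hpos : 0 ≤ᵐ[gaussMeasure] fun x => -log x := by
    filter_upwards [ae_gaussMeasure_mem_Ico] with x hx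
    exact neg_nonneg.mpr (log_nonpos hx.1 hx.2.le)
  rw [← integral_neg_log_gaussMeasure]
  exact ae_tendsto_birkhoffAverage_of_summable_covariance measurePreserving_gaussMap
    memLp_two_neg_log_gaussMeasure hpos summable_covariance_neg_log_iterate

end Covariance

theorem tendsto_log_qden_div {x l : ℝ} (hx : Irrational x) (hx01 : x ∈ Set.Ioo (0 : ℝ) 1)
    (hl : Tendsto (fun n => birkhoffAverage ℝ gaussMap (fun t => -log t) n x) atTop (𝓝 l)) :
    Tendsto (fun n : ℕ => (1 / (n : ℝ)) * log (qden x n)) atTop (𝓝 l) := by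
  have hlower : Tendsto (fun n : ℕ =>
      birkhoffAverage ℝ gaussMap (fun t => -log t) n x - log 2 / n) atTop (𝓝 l) := by
    simpa using hl.sub (tendsto_const_div_atTop_nhds_zero_nat (log 2))
  refine tendsto_of_tendsto_of_tendsto_of_le_of_le hlower hl (fun n => ?_) (fun n => ?_) <;>
    simp only [birkhoffAverage, smul_eq_mul, inv_mul_eq_div, one_div]
  · rw [← sub_div]
    gcongr
    exact sub_le_iff_le_add.mpr (birkhoffSum_le_log_qden_add hx hx01 n)
  · gcongr
    exact log_qden_le_birkhoffSum hx hx01 n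

/-- **Lévy's theorem.** For Lebesgue-almost every `x ∈ [0,1)`, the limit
`lim_{n→∞} (1/n) log q_n(x)` exists and equals `π² / (12 log 2)`. -/
theorem levy_constant :
    ∀ᵐ x ∂(volume.restrict (Set.Ico (0:ℝ) 1)),
      Tendsto (fun n : ℕ => (1 / (n : ℝ)) * Real.log ((qden x n : ℝ))) atTop
        (𝓝 (π ^ 2 / (12 * Real.log 2))) := by
  have hirr : ∀ᵐ x ∂volume.restrict (Set.Ico (0 : ℝ) 1), Irrational x :=
    (Set.countable_range ((↑) : ℚ → ℝ)).ae_notMem _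
  have havg := volume_restrict_absolutelyContinuous_gaussMeasure.ae_le
    ae_tendsto_birkhoffAverage_neg_log
  filter_upwards [ae_restrict_mem measurableSet_Ico, hirr, havg] with x hx hx_irr hx_avg
  exact tendsto_log_qden_div hx_irr ⟨hx.1.lt_of_ne hx_irr.ne_zero.symm, hx.2⟩ hx_avg
end

section
/- Suppose the coordinate process {A_n, n ≥ 1} is ψ-mixing and that E(A_1^t) < ∞ for each 0 < t < 1. Then for every δ > 0 there exist N > 0, B > 0 and α > 0 such that for all n ≥ N, P(|(1/n)·log Q_n + ∫ log X dP| ≥ δ) ≤ B·exp(−α·n). -/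
open Filter MeasureTheory Real Topology

instance : MeasurableSpace ℕ+ := ⊤

/-- `cfP a n` is the continued fraction numerator `P_{n-1}` of the sequence
`a 1, a 2, …` (so `cfP a 0 = P_{-1} = 1`, `cfP a 1 = P_0 = 0`, and
`P_n = a_n P_{n-1} + P_{n-2}` for `n ≥ 1`). -/
def cfP (a : ℕ → ℕ) : ℕ → ℤ
  | 0 => 1
  | 1 => 0
  | n + 2 => (a (n + 1) : ℤ) * cfP a (n + 1) + cfP a n

/-- The `n`-th convergent `P_n / Q_n = [a_1, …, a_n]`. -/
noncomputable def cfConv (a : ℕ → ℕ) (n : ℕ) : ℝ :=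
  (cfP a (n + 1) : ℝ) / (cfQ a (n + 1) : ℝ)

/-- The value `[a_1, a_2, …]` of the infinite continued fraction, as the limit
of the convergents. -/
noncomputable def cfVal (a : ℕ → ℕ) : ℝ := limUnder atTop (cfConv a)

/-- The left shift on `{1,2,3,…}^ℕ` (coordinate `n-1` of `ω` is `A_n(ω)`). -/
def shiftS : (ℕ → ℕ+) → (ℕ → ℕ+) := fun ω n => ω (n + 1)

/-- `Xtail ω k = X_k(ω) = [A_k(ω), A_{k+1}(ω), …]` for `k ≥ 1`, where
`A_n(ω) = ω (n-1)`. -/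
noncomputable def Xtail (ω : ℕ → ℕ+) (k : ℕ) : ℝ :=
  cfVal (fun i => (ω (i + k - 2) : ℕ))

/-- `Qent ω n = Q_n(ω)`, the denominator of the convergent `[A_1(ω), …, A_n(ω)]`. -/
def Qent (ω : ℕ → ℕ+) (n : ℕ) : ℤ := cfQ (fun i => (ω (i - 1) : ℕ)) (n + 1)

/-- The σ-algebra `σ(A_1, …, A_m)` generated by the first `m` coordinates. -/
def finAlg (m : ℕ) : MeasurableSpace (ℕ → ℕ+) :=
  MeasurableSpace.comap (fun ω (i : Fin m) => ω i) inferInstance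

/-- The σ-algebra `σ(A_{j+1}, A_{j+2}, …)` generated by the coordinates of
index `≥ j`, i.e. by `A_{j+1}, A_{j+2}, …`. -/
def tailAlg (j : ℕ) : MeasurableSpace (ℕ → ℕ+) :=
  MeasurableSpace.comap (fun ω (i : ℕ) => ω (i + j)) inferInstance

/-- The process `{A_n, n ≥ 1}` is ψ-mixing: it is stationary (the left shift
preserves `P`) and there is `ψ : ℕ → [0,∞)` with `ψ(n) → 0` such that
`|E(fg) − E(f)E(g)| ≤ ψ(n) E|f| E|g|` for all `m, n ≥ 1`, every integrable
`f ∈ σ(A_1,…,A_m)` and every integrable `g ∈ σ(A_{m+n}, A_{m+n+1}, …)`. -/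
def PsiMixing (P : Measure (ℕ → ℕ+)) : Prop :=
  MeasurePreserving shiftS P P ∧
  ∃ ψ : ℕ → ℝ, (∀ n, 0 ≤ ψ n) ∧ Tendsto ψ atTop (𝓝 0) ∧
    ∀ m n : ℕ, 1 ≤ m → 1 ≤ n → ∀ f g : (ℕ → ℕ+) → ℝ,
      Integrable f P → Integrable g P →
      Measurable[finAlg m] f → Measurable[tailAlg (m + n - 1)] g →
      |(∫ ω, f ω * g ω ∂P) - (∫ ω, f ω ∂P) * (∫ ω, g ω ∂P)| ≤
        ψ n * (∫ ω, |f ω| ∂P) * (∫ ω, |g ω| ∂P)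

/-!
Since `(Q_{n+1} + Q_n · X∘σ^{n+1}) · ∏_{k ≤ n} X∘σ^k = 1`, the process `log Q_n` stays within
`log 2` of the Birkhoff sums of `-log X`. Unlike these sums it depends on the first `n` digits
only, and both `log Q_n` and `-log Q_n` are subadditive along the shift up to an additive constant.
Cut time into blocks of a fixed length `L` and keep every `r`-th block: over the gaps, mixing makes
the remaining blocks independent up to a factor `C` per block, with `C` close to `1` for large `r`.
If `Z` is a block centred at a level slightly above its mean, then `E Z < 0`, so
`C · E exp(sZ) < 1` for small `s > 0` and `C` close to `1`, and the exponential Markov inequality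
gives geometric decay along each of the `r` residue classes of blocks.
-/

open ProbabilityTheory ExpGrowth Function
open scoped ENNReal

section ExponentialGrowth

lemma expGrowthSup_neg_iff {u : ℕ → ℝ≥0∞} :
    expGrowthSup u < 0 ↔
      ∃ α : ℝ, 0 < α ∧ ∀ᶠ n : ℕ in atTop, u n ≤ ENNReal.ofReal (exp (-α * n)) := by
  have exp_mul (α : ℝ) (n : ℕ) :
      EReal.exp (((-α : ℝ) : EReal) * n) = ENNReal.ofReal (exp (-α * n)) := by
    rw [← EReal.exp_coe]
    norm_cast
  constructor
  · intro h
    obtain ⟨b, hub, hb⟩ := EReal.lt_iff_exists_real_btwn.1 h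
    refine ⟨-b, neg_pos.2 (by exact_mod_cast hb), (eventually_le_exp hub).mono fun n hn ↦ ?_⟩
    rwa [← exp_mul, neg_neg]
  · rintro ⟨α, hα, hu⟩
    have hgrowth : expGrowthSup u ≤ ((-α : ℝ) : EReal) :=
      Eventually.expGrowthSup_le (hu.mono fun n hn ↦ by rwa [exp_mul])
    exact hgrowth.trans_lt (by exact_mod_cast neg_neg_of_pos hα)

lemma expGrowthSup_mul_pow_div_neg {K ρ : ℝ≥0∞} (hK : K ≠ ∞) (hρ : ρ < 1) {R : ℕ} (hR : 0 < R) :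
    expGrowthSup (fun n ↦ K * ρ ^ (n / R)) < 0 := by
  obtain ⟨ρ', hρρ', hρ'⟩ := exists_between hρ
  set κ := ρ' ^ (R⁻¹ : ℝ)
  have hκR : κ ^ R = ρ' := ENNReal.rpow_inv_natCast_pow hR.ne' ρ'
  have hκ_lt : κ < 1 := ENNReal.rpow_lt_one hρ' (by positivity)
  have hκ_ne : κ ^ R ≠ 0 := hκR ▸ (pos_of_gt hρρ').ne'
  have hκ_top : κ ^ R ≠ ∞ := ENNReal.pow_ne_top (hκ_lt.trans ENNReal.one_lt_top).ne
  have hbound (n : ℕ) : K * ρ ^ (n / R) ≤ K * (κ ^ R)⁻¹ * κ ^ n := by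
    calc K * ρ ^ (n / R) ≤ K * κ ^ (R * (n / R)) := by
          rw [pow_mul, hκR]
          gcongr
      _ = K * (κ ^ R)⁻¹ * κ ^ (R * (n / R) + R) := by
          rw [pow_add, mul_comm (κ ^ _) (κ ^ R), mul_assoc, ← mul_assoc (κ ^ R)⁻¹,
            ENNReal.inv_mul_cancel hκ_ne hκ_top, one_mul]
      _ ≤ K * (κ ^ R)⁻¹ * κ ^ n :=
          mul_le_mul_right (pow_le_pow_right_of_le_one' hκ_lt.le
            (Nat.lt_mul_div_succ n hR).le) _
  calc expGrowthSup (fun n ↦ K * ρ ^ (n / R)) ≤ expGrowthSup (fun n ↦ κ ^ n) :=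
        expGrowthSup_le_of_eventually_le
          (ENNReal.mul_ne_top hK (ENNReal.inv_ne_top.2 hκ_ne)) (.of_forall hbound)
    _ = ENNReal.log κ := expGrowthSup_pow
    _ < 0 := by simpa using hκ_lt

end ExponentialGrowth

section ExponentialMoments

variable {Ω : Type*} {mΩ : MeasurableSpace Ω} {μ : Measure Ω} {X Y : Ω → ℝ}

lemma zero_mem_interior_integrableExpSet_neg (hX : 0 ∈ interior (integrableExpSet X μ)) :
    0 ∈ interior (integrableExpSet (fun ω ↦ -X ω) μ) := by
  rw [mem_interior_iff_mem_nhds] at hX ⊢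
  have hneg : Tendsto (fun s : ℝ ↦ -s) (𝓝 0) (𝓝 0) := by simpa using tendsto_neg (0 : ℝ)
  filter_upwards [hneg.eventually hX] with s (hs : Integrable (fun ω ↦ exp (-s * X ω)) μ)
  simpa [integrableExpSet] using hs

lemma zero_mem_interior_integrableExpSet_of_abs_sub_le (hX : AEMeasurable X μ) {c : ℝ}
    (hXY : ∀ ω, |X ω - Y ω| ≤ c) (hY : 0 ∈ interior (integrableExpSet Y μ)) :
    0 ∈ interior (integrableExpSet X μ) := by
  refine interior_mono (fun s (hs : Integrable (fun ω ↦ exp (s * Y ω)) μ) ↦ ?_) hY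
  refine (hs.const_mul (exp (|s| * c))).mono' (hX.const_mul s).exp.aestronglyMeasurable
    (.of_forall fun ω ↦ ?_)
  rw [norm_of_nonneg (exp_pos _).le, ← exp_add, exp_le_exp]
  calc s * X ω = s * (X ω - Y ω) + s * Y ω := by ring
    _ ≤ |s| * |X ω - Y ω| + s * Y ω := by
        rw [← abs_mul]
        gcongr
        exact le_abs_self _
    _ ≤ |s| * c + s * Y ω := by gcongr; exact hXY ω

lemma zero_mem_interior_integrableExpSet_add (hX : 0 ∈ interior (integrableExpSet X μ))
    (hY : 0 ∈ interior (integrableExpSet Y μ)) :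
    0 ∈ interior (integrableExpSet (X + Y) μ) := by
  have hXm := aemeasurable_of_mem_interior_integrableExpSet hX
  have hYm := aemeasurable_of_mem_interior_integrableExpSet hY
  rw [mem_interior_iff_mem_nhds] at hX hY ⊢
  have hdouble : Tendsto (fun s : ℝ ↦ 2 * s) (𝓝 0) (𝓝 0) := by
    simpa using (continuous_const_mul (2 : ℝ)).tendsto 0
  filter_upwards [hdouble.eventually hX, hdouble.eventually hY] with s hsX hsY
  have hsum : Integrable (fun ω ↦ exp (2 * s * X ω) + exp (2 * s * Y ω)) μ := hsX.add hsY
  refine hsum.mono' ((hXm.add hYm).const_mul s).exp.aestronglyMeasurable (.of_forall fun ω ↦ ?_)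
  have hsq (x : ℝ) : exp (2 * s * x) = exp (s * x) ^ 2 := by rw [← exp_nat_mul]; ring_nf
  rw [norm_of_nonneg (exp_pos _).le, Pi.add_apply, mul_add, exp_add, hsq, hsq]
  nlinarith [sq_nonneg (exp (s * X ω) - exp (s * Y ω)), exp_pos (s * X ω), exp_pos (s * Y ω)]

lemma zero_mem_interior_integrableExpSet_comp {T : Ω → Ω} (hT : MeasurePreserving T μ μ)
    (hX : 0 ∈ interior (integrableExpSet X μ)) :
    0 ∈ interior (integrableExpSet (fun ω ↦ X (T ω)) μ) :=
  interior_mono (fun s (hs : Integrable (fun ω ↦ exp (s * X ω)) μ) ↦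
    hT.integrable_comp_of_integrable hs) hX

lemma zero_mem_interior_integrableExpSet_birkhoffSum [IsFiniteMeasure μ] {T : Ω → Ω}
    (hT : MeasurePreserving T μ μ) (hX : 0 ∈ interior (integrableExpSet X μ)) (n : ℕ) :
    0 ∈ interior (integrableExpSet (birkhoffSum T X n) μ) := by
  induction n with
  | zero => simp [integrableExpSet]
  | succ n ih =>
    have hsum := zero_mem_interior_integrableExpSet_add ih
      (zero_mem_interior_integrableExpSet_comp (hT.iterate n) hX)
    rwa [show birkhoffSum T X (n + 1) = birkhoffSum T X n + fun ω ↦ X (T^[n] ω) from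
      funext (birkhoffSum_succ T X n)]

lemma zero_mem_interior_integrableExpSet_log (hX : AEMeasurable X μ) (hX1 : ∀ ω, 1 ≤ X ω)
    {t : ℝ} (ht : 0 < t) (hXt : Integrable (fun ω ↦ X ω ^ t) μ) :
    0 ∈ interior (integrableExpSet (fun ω ↦ log (X ω)) μ) := by
  rw [mem_interior_iff_mem_nhds]
  filter_upwards [Iio_mem_nhds ht] with s hs
  refine hXt.mono' (hX.log.const_mul s).exp.aestronglyMeasurable (.of_forall fun ω ↦ ?_)
  rw [norm_of_nonneg (exp_pos _).le, rpow_def_of_pos (zero_lt_one.trans_le (hX1 ω)), exp_le_exp,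
    mul_comm]
  exact mul_le_mul_of_nonneg_left (le_of_lt hs) (log_nonneg (hX1 ω))

lemma exists_pos_integral_exp_lt_one [IsProbabilityMeasure μ]
    (hX : 0 ∈ interior (integrableExpSet X μ)) (hneg : ∫ ω, X ω ∂μ < 0) :
    ∃ s : ℝ, 0 < s ∧ Integrable (fun ω ↦ exp (s * X ω)) μ ∧ ∫ ω, exp (s * X ω) ∂μ < 1 := by
  have hderiv : HasDerivAt (mgf X μ) (∫ ω, X ω ∂μ) 0 := by simpa using hasDerivAt_mgf hX
  have hslope : ∀ᶠ s in 𝓝[>] (0 : ℝ), slope (mgf X μ) 0 s < 0 :=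
    (hderiv.hasDerivWithinAt (s := Set.Ioi 0)).limsup_slope_le' (by simp) hneg
  have hmem : ∀ᶠ s in 𝓝[>] (0 : ℝ), s ∈ integrableExpSet X μ :=
    mem_nhdsWithin_of_mem_nhds (mem_interior_iff_mem_nhds.1 hX)
  obtain ⟨s, hslope_s, hmem_s, hs : 0 < s⟩ := (hslope.and (hmem.and self_mem_nhdsWithin)).exists
  refine ⟨s, hs, hmem_s, ?_⟩
  rw [slope_def_field, mgf_zero, sub_zero, div_lt_iff₀ hs, zero_mul, sub_neg] at hslope_s
  exact hslope_s

lemma expGrowthSup_measure_mul_add_le_neg [IsFiniteMeasure μ]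
    (hX : 0 ∈ interior (integrableExpSet X μ)) {b : ℝ} (hb : 0 < b) (c : ℝ) :
    expGrowthSup (fun n ↦ μ {ω | n * b + c ≤ X ω}) < 0 := by
  have hmem : ∀ᶠ s in 𝓝[>] (0 : ℝ), s ∈ integrableExpSet X μ :=
    mem_nhdsWithin_of_mem_nhds (mem_interior_iff_mem_nhds.1 hX)
  obtain ⟨s, hmem_s, hs : 0 < s⟩ := (hmem.and self_mem_nhdsWithin).exists
  have hbound (n : ℕ) : μ {ω | n * b + c ≤ X ω} ≤
      ENNReal.ofReal (exp (-s * c) * mgf X μ s) * ENNReal.ofReal (exp (-(s * b) * n)) := by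
    rw [← ENNReal.ofReal_mul (mul_nonneg (exp_pos _).le mgf_nonneg), ← ofReal_measureReal]
    refine ENNReal.ofReal_le_ofReal ((measure_ge_le_exp_mul_mgf _ hs.le hmem_s).trans_eq ?_)
    rw [mul_right_comm, ← exp_add]
    ring_nf
  exact (expGrowthSup_le_of_eventually_le ENNReal.ofReal_ne_top (.of_forall hbound)).trans_lt
    (expGrowthSup_neg_iff.2 ⟨s * b, by positivity, .of_forall fun _ ↦ le_rfl⟩)

end ExponentialMoments

section BirkhoffSums

variable {Ω : Type*}

lemma birkhoffSum_mul {M : Type*} [AddCommMonoid M] (T : Ω → Ω) (g : Ω → M) (r n : ℕ) (ω : Ω) :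
    birkhoffSum T g (r * n) ω = ∑ c ∈ Finset.range r, birkhoffSum T^[r] g n (T^[c] ω) := by
  induction n with
  | zero => simp
  | succ n ih =>
    rw [Nat.mul_succ, birkhoffSum_add, ih]
    simp_rw [birkhoffSum_succ _ _ n, Finset.sum_add_distrib, birkhoffSum, ← iterate_mul,
      ← iterate_add_apply, add_comm (r * n)]

variable [MeasurableSpace Ω] {μ : Measure Ω} {T : Ω → Ω}

lemma measurable_birkhoffSum {g : Ω → ℝ} (hT : Measurable T) (hg : Measurable g) (n : ℕ) :
    Measurable (birkhoffSum T g n) :=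
  Finset.measurable_sum _ fun k _ ↦ hg.comp (hT.iterate k)

lemma integrable_birkhoffSum {g : Ω → ℝ} (hT : MeasurePreserving T μ μ) (hg : Integrable g μ)
    (n : ℕ) : Integrable (birkhoffSum T g n) μ :=
  integrable_finsetSum _ fun k _ ↦ (hT.iterate k).integrable_comp_of_integrable hg

lemma integral_birkhoffSum {g : Ω → ℝ} (hT : MeasurePreserving T μ μ) (hg : Integrable g μ)
    (n : ℕ) : ∫ ω, birkhoffSum T g n ω ∂μ = n * ∫ ω, g ω ∂μ := by
  have hint (k : ℕ) : Integrable (fun ω ↦ g (T^[k] ω)) μ :=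
    (hT.iterate k).integrable_comp_of_integrable hg
  have hcomp (k : ℕ) : ∫ ω, g (T^[k] ω) ∂μ = ∫ ω, g ω ∂μ := by
    have hk := hT.iterate k
    have hmap := integral_map hk.aemeasurable (hk.map_eq.symm ▸ hg.aestronglyMeasurable)
    rw [← hmap, hk.map_eq]
  simp_rw [birkhoffSum]
  rw [integral_finsetSum _ fun k _ ↦ hint k]
  simp [hcomp]

lemma integral_le_of_le_birkhoffSum_add [IsProbabilityMeasure μ] (hT : MeasurePreserving T μ μ)
    {g X : Ω → ℝ} (hg : Integrable g μ) (hX : Integrable X μ) {n : ℕ} {c : ℝ}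
    (hXg : ∀ ω, X ω ≤ birkhoffSum T g n ω + c) : ∫ ω, X ω ∂μ ≤ n * ∫ ω, g ω ∂μ + c := by
  have hsum := integrable_birkhoffSum hT hg n
  calc ∫ ω, X ω ∂μ ≤ ∫ ω, (birkhoffSum T g n ω + c) ∂μ :=
        integral_mono hX (hsum.add (integrable_const c)) hXg
    _ = n * ∫ ω, g ω ∂μ + c := by
        rw [integral_add hsum (integrable_const c), integral_birkhoffSum hT hg]
        simp

lemma measure_birkhoffSum_mul_nonneg_le (hT : MeasurePreserving T μ μ) {g : Ω → ℝ}
    (hg : Measurable g) {r : ℕ} (hr : 0 < r) (n : ℕ) :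
    μ {ω | 0 ≤ birkhoffSum T g (r * n) ω} ≤ r * μ {ω | 0 ≤ birkhoffSum T^[r] g n ω} := by
  set E := {ω | 0 ≤ birkhoffSum T^[r] g n ω}
  have hE : MeasurableSet E :=
    measurableSet_le measurable_const (measurable_birkhoffSum (hT.measurable.iterate r) hg n)
  have hcover : {ω | 0 ≤ birkhoffSum T g (r * n) ω} ⊆ ⋃ c ∈ Finset.range r, T^[c] ⁻¹' E := by
    intro ω hω
    rw [Set.mem_ofPred_eq, birkhoffSum_mul] at hω
    obtain ⟨c, hc, hc_nonneg⟩ :=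
      Finset.exists_le_of_sum_le (f := fun _ ↦ (0 : ℝ)) (Finset.nonempty_range_iff.2 hr.ne')
        (by simpa using hω)
    exact Set.mem_biUnion hc hc_nonneg
  calc μ {ω | 0 ≤ birkhoffSum T g (r * n) ω}
      ≤ ∑ c ∈ Finset.range r, μ (T^[c] ⁻¹' E) :=
        (measure_mono hcover).trans (measure_biUnion_finset_le _ _)
    _ = r * μ E := by
        simp [(hT.iterate _).measure_preimage hE.nullMeasurableSet]

end BirkhoffSums

section Mixing

variable {Ω : Type*}

/-- The σ-algebra `m` is independent of `T⁻¹ mΩ` up to the factor `C`. For stationary `T`, this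
bounds `μ (A ∩ B)` by `C * μ A * μ B` for `A ∈ m` and `B ∈ T⁻¹ mΩ`. -/
def QuasiIndep (m : MeasurableSpace Ω) {mΩ : MeasurableSpace Ω} (μ : Measure Ω) (C : ℝ≥0∞)
    (T : Ω → Ω) : Prop :=
  ∀ ⦃A B : Set Ω⦄, MeasurableSet[m] A → MeasurableSet[mΩ] B →
    μ (A ∩ T ⁻¹' B) ≤ C * (μ A * μ B)

/-- Upper ψ-mixing (also called ψ⁺-mixing) of a transformation `T` with respect to the σ-algebras
`F n`, thought of as the past up to time `n`: the past `F n` becomes quasi-independent of the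
future after time `n + k` with a factor tending to `1` as the gap `k` grows, uniformly in `n`. -/
def UpperPsiMixing [MeasurableSpace Ω] (μ : Measure Ω) (T : Ω → Ω)
    (F : ℕ → MeasurableSpace Ω) : Prop :=
  ∀ C : ℝ≥0∞, 1 < C → ∀ᶠ k in atTop, ∀ n, QuasiIndep (F n) μ C T^[n + k]

namespace QuasiIndep

variable {m mΩ : MeasurableSpace Ω} {μ : Measure Ω} {C : ℝ≥0∞} {T : Ω → Ω}

lemma setLIntegral_comp_le (h : QuasiIndep m μ C T) (hm : m ≤ mΩ) (hT : Measurable T)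
    {A : Set Ω} (hA : MeasurableSet[m] A) {g : Ω → ℝ≥0∞} (hg : Measurable g) :
    ∫⁻ ω in A, g (T ω) ∂μ ≤ C * (μ A * ∫⁻ ω, g ω ∂μ) := by
  have hle : (μ.restrict A).map T ≤ (C * μ A) • μ := by
    refine Measure.le_iff.2 fun B hB ↦ ?_
    rw [Measure.map_apply hT hB, Measure.restrict_apply' (hm A hA), Set.inter_comm]
    simpa [mul_assoc] using h hA hB
  calc ∫⁻ ω in A, g (T ω) ∂μ = ∫⁻ ω, g ω ∂(μ.restrict A).map T := (lintegral_map hg hT).symm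
    _ ≤ ∫⁻ ω, g ω ∂(C * μ A) • μ := lintegral_mono' hle le_rfl
    _ = C * (μ A * ∫⁻ ω, g ω ∂μ) := by rw [lintegral_smul_measure, smul_eq_mul, mul_assoc]

lemma lintegral_mul_comp_le (h : QuasiIndep m μ C T) (hm : m ≤ mΩ) (hT : Measurable T)
    {f g : Ω → ℝ≥0∞} (hf : Measurable[m] f) (hg : Measurable g) :
    ∫⁻ ω, f ω * g (T ω) ∂μ ≤ C * ((∫⁻ ω, f ω ∂μ) * ∫⁻ ω, g ω ∂μ) := by
  have hle : (μ.withDensity (g ∘ T)).trim hm ≤ (C * ∫⁻ ω, g ω ∂μ) • μ.trim hm := by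
    refine Measure.le_iff.2 fun A hA ↦ ?_
    rw [trim_measurableSet_eq hm hA, withDensity_apply _ (hm A hA), Measure.smul_apply,
      trim_measurableSet_eq hm hA, smul_eq_mul, mul_assoc, mul_comm (∫⁻ ω, g ω ∂μ)]
    exact h.setLIntegral_comp_le hm hT hA hg
  calc ∫⁻ ω, f ω * g (T ω) ∂μ = ∫⁻ ω, f ω ∂(μ.withDensity (g ∘ T)) := by
        rw [lintegral_withDensity_eq_lintegral_mul _ (hg.comp hT) (hf.mono hm le_rfl)]
        simp only [Pi.mul_apply, comp_apply, mul_comm]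
    _ = ∫⁻ ω, f ω ∂(μ.withDensity (g ∘ T)).trim hm := (lintegral_trim hm hf).symm
    _ ≤ ∫⁻ ω, f ω ∂(C * ∫⁻ ω, g ω ∂μ) • μ.trim hm := lintegral_mono' hle le_rfl
    _ = C * ((∫⁻ ω, f ω ∂μ) * ∫⁻ ω, g ω ∂μ) := by
        rw [lintegral_smul_measure, lintegral_trim hm hf, smul_eq_mul, mul_assoc,
          mul_comm (∫⁻ ω, g ω ∂μ)]

lemma lintegral_prod_iterate_le [IsProbabilityMeasure μ] (h : QuasiIndep m μ C T) (hm : m ≤ mΩ)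
    (hT : Measurable T) {f : Ω → ℝ≥0∞} (hf : Measurable[m] f) (n : ℕ) :
    ∫⁻ ω, ∏ i ∈ Finset.range n, f (T^[i] ω) ∂μ ≤ (C * ∫⁻ ω, f ω ∂μ) ^ n := by
  induction n with
  | zero => simp
  | succ n ih =>
    have hprod : Measurable fun ω ↦ ∏ i ∈ Finset.range n, f (T^[i] ω) :=
      Finset.measurable_prod _ fun i _ ↦ (hf.mono hm le_rfl).comp (hT.iterate i)
    calc ∫⁻ ω, ∏ i ∈ Finset.range (n + 1), f (T^[i] ω) ∂μ
        = ∫⁻ ω, f ω * ∏ i ∈ Finset.range n, f (T^[i] (T ω)) ∂μ := by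
          simp_rw [Finset.prod_range_succ', iterate_succ_apply, iterate_zero_apply, mul_comm]
      _ ≤ C * ((∫⁻ ω, f ω ∂μ) * ∫⁻ ω, ∏ i ∈ Finset.range n, f (T^[i] ω) ∂μ) :=
          h.lintegral_mul_comp_le hm hT hf hprod
      _ ≤ C * ((∫⁻ ω, f ω ∂μ) * (C * ∫⁻ ω, f ω ∂μ) ^ n) := by gcongr
      _ = (C * ∫⁻ ω, f ω ∂μ) ^ (n + 1) := by rw [pow_succ', mul_assoc]

lemma measure_birkhoffSum_nonneg_le [IsProbabilityMeasure μ] (h : QuasiIndep m μ C T)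
    (hm : m ≤ mΩ) (hT : Measurable T) {Z : Ω → ℝ} (hZ : Measurable[m] Z) {s : ℝ} (hs : 0 ≤ s)
    (n : ℕ) :
    μ {ω | 0 ≤ birkhoffSum T Z n ω} ≤ (C * ∫⁻ ω, ENNReal.ofReal (exp (s * Z ω)) ∂μ) ^ n := by
  have hexp : Measurable[m] fun ω ↦ ENNReal.ofReal (exp (s * Z ω)) :=
    (hZ.const_mul s).exp.ennreal_ofReal
  have hprod (ω : Ω) : ∏ i ∈ Finset.range n, ENNReal.ofReal (exp (s * Z (T^[i] ω))) =
      ENNReal.ofReal (exp (s * birkhoffSum T Z n ω)) := by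
    rw [← ENNReal.ofReal_prod_of_nonneg fun _ _ ↦ (exp_pos _).le, ← exp_sum, ← Finset.mul_sum,
      birkhoffSum]
  calc μ {ω | 0 ≤ birkhoffSum T Z n ω}
      ≤ μ {ω | 1 ≤ ∏ i ∈ Finset.range n, ENNReal.ofReal (exp (s * Z (T^[i] ω)))} := by
        refine measure_mono fun ω (hω : 0 ≤ birkhoffSum T Z n ω) ↦ ?_
        rw [Set.mem_ofPred_eq, hprod, ENNReal.one_le_ofReal, one_le_exp_iff]
        positivity
    _ ≤ ∫⁻ ω, ∏ i ∈ Finset.range n, ENNReal.ofReal (exp (s * Z (T^[i] ω))) ∂μ := by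
        rw [← one_mul (μ _)]
        exact mul_meas_ge_le_lintegral (Finset.measurable_prod _ fun i _ ↦
          (hexp.mono hm le_rfl).comp (hT.iterate i)) 1
    _ ≤ _ := h.lintegral_prod_iterate_le hm hT hexp n

end QuasiIndep

namespace UpperPsiMixing

variable {mΩ : MeasurableSpace Ω} {μ : Measure Ω} {T : Ω → Ω} {F : ℕ → MeasurableSpace Ω}

lemma exists_quasiIndep_iterate (hmix : UpperPsiMixing μ T F) {C : ℝ≥0∞} (hC : 1 < C) {L : ℕ}
    (hL : 0 < L) : ∃ r, 0 < r ∧ QuasiIndep (F L) μ C (T^[L])^[r] := by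
  obtain ⟨k, hk⟩ := eventually_atTop.1 (hmix C hC)
  refine ⟨k + 1, k.succ_pos, ?_⟩
  rw [← iterate_mul, Nat.mul_succ, add_comm]
  exact hk (L * k) (Nat.le_mul_of_pos_left k hL) L

variable [IsProbabilityMeasure μ]

lemma exists_measure_birkhoffSum_nonneg_le (hmix : UpperPsiMixing μ T F)
    (hT : MeasurePreserving T μ μ) {L : ℕ} (hL : 0 < L) (hF : F L ≤ mΩ) {Z : Ω → ℝ}
    (hZ : Measurable[F L] Z) (hexp : 0 ∈ interior (integrableExpSet Z μ))
    (hneg : ∫ ω, Z ω ∂μ < 0) :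
    ∃ r, 0 < r ∧ ∃ ρ : ℝ≥0∞, ρ < 1 ∧
      ∀ n, μ {ω | 0 ≤ birkhoffSum T^[L] Z (r * n) ω} ≤ r * ρ ^ n := by
  obtain ⟨s, hs, hint, hlt⟩ := exists_pos_integral_exp_lt_one hexp hneg
  set w := ∫⁻ ω, ENNReal.ofReal (exp (s * Z ω)) ∂μ with hw_def
  have hw : w < 1 := by
    rw [hw_def, ← ofReal_integral_eq_lintegral_ofReal hint (.of_forall fun _ ↦ (exp_pos _).le)]
    exact ENNReal.ofReal_lt_one.2 hlt
  obtain ⟨C, hC, hCw⟩ : ∃ C : ℝ≥0∞, 1 < C ∧ C * w < 1 := by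
    obtain ⟨ρ, hwρ, hρ⟩ := exists_between hw
    exact ⟨ρ⁻¹, ENNReal.one_lt_inv.2 hρ, by
      rwa [mul_comm, ← div_eq_mul_inv, ENNReal.div_lt_iff (.inl (pos_of_gt hwρ).ne')
        (.inl (hρ.trans ENNReal.one_lt_top).ne), one_mul]⟩
  obtain ⟨r, hr, hindep⟩ := hmix.exists_quasiIndep_iterate hC hL
  have hTL := hT.iterate L
  refine ⟨r, hr, C * w, hCw, fun n ↦ ?_⟩
  calc μ {ω | 0 ≤ birkhoffSum T^[L] Z (r * n) ω}
      ≤ r * μ {ω | 0 ≤ birkhoffSum (T^[L])^[r] Z n ω} :=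
        measure_birkhoffSum_mul_nonneg_le hTL (hZ.mono hF le_rfl) hr n
    _ ≤ r * (C * w) ^ n := by
        gcongr
        exact hindep.measure_birkhoffSum_nonneg_le hF (hTL.measurable.iterate r) hZ hs.le n

end UpperPsiMixing

end Mixing

section SubadditiveProcesses

variable {Ω : Type*} {T : Ω → Ω} {f : ℕ → Ω → ℝ}

lemma le_birkhoffSum_iterate_add (hsub : ∀ m n ω, f (m + n) ω ≤ f m ω + f n (T^[m] ω))
    (L k q : ℕ) (ω : Ω) :
    f (L * k + q) ω ≤ birkhoffSum T^[L] (f L) k ω + f q (T^[L * k] ω) := by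
  induction k generalizing ω with
  | zero => simp
  | succ k ih =>
    have hsplit := hsub L (L * k + q) ω
    rw [← add_assoc, add_comm L, ← Nat.mul_succ] at hsplit
    rw [birkhoffSum_succ', Nat.mul_succ, iterate_add_apply]
    rw [Nat.mul_succ] at hsplit
    linarith [ih (T^[L] ω)]

lemma nonneg_birkhoffSum_or_le_of_mul_le
    (hsub : ∀ m n ω, f (m + n) ω ≤ f m ω + f n (T^[m] ω)) {L k q : ℕ} {a b : ℝ} {ω : Ω}
    (hω : (L * k + q : ℕ) * a ≤ f (L * k + q) ω) :
    0 ≤ birkhoffSum T^[L] (fun ω ↦ f L ω - L * b) k ω ∨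
      (L * k + q : ℕ) * (a - b) + q * b ≤ f q (T^[L * k] ω) := by
  have hsplit := le_birkhoffSum_iterate_add hsub L k q ω
  have hcenter : birkhoffSum T^[L] (fun ω ↦ f L ω - L * b) k ω =
      birkhoffSum T^[L] (f L) k ω - L * k * b := by
    simp only [birkhoffSum, Finset.sum_sub_distrib, Finset.sum_const, Finset.card_range,
      nsmul_eq_mul]
    ring
  rw [hcenter]
  push_cast at hω ⊢
  by_contra! hcon
  linarith [hcon.1, hcon.2]

variable {mΩ : MeasurableSpace Ω} {μ : Measure Ω} [IsProbabilityMeasure μ]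
  {F : ℕ → MeasurableSpace Ω}

theorem expGrowthSup_measure_mul_le_subadditive_neg (hT : MeasurePreserving T μ μ)
    (hmix : UpperPsiMixing μ T F) (hsub : ∀ m n ω, f (m + n) ω ≤ f m ω + f n (T^[m] ω))
    (hf : ∀ n, Measurable (f n)) (hexp : ∀ n, 0 ∈ interior (integrableExpSet (f n) μ))
    {L : ℕ} (hL : 0 < L) (hF : F L ≤ mΩ) (hfL : Measurable[F L] (f L)) {a : ℝ}
    (ha : ∫ ω, f L ω ∂μ < L * a) :
    expGrowthSup (fun n ↦ μ {ω | n * a ≤ f n ω}) < 0 := by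
  have hL' : (0 : ℝ) < L := by exact_mod_cast hL
  obtain ⟨b, hb, hba⟩ : ∃ b, ∫ ω, f L ω ∂μ < L * b ∧ b < a := by
    obtain ⟨b, hb, hba⟩ := exists_between ((div_lt_iff₀' hL').2 ha)
    exact ⟨b, (div_lt_iff₀' hL').1 hb, hba⟩
  have hZexp : 0 ∈ interior (integrableExpSet (fun ω ↦ f L ω - L * b) μ) := by
    refine zero_mem_interior_integrableExpSet_of_abs_sub_le (c := |L * b|)
      ((hf L).sub_const _).aemeasurable (fun ω ↦ ?_) (hexp L)
    rw [sub_sub_cancel_left, abs_neg]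
  have hZneg : ∫ ω, (f L ω - L * b) ∂μ < 0 := by
    rw [integral_sub (integrable_of_mem_interior_integrableExpSet (hexp L)) (integrable_const _)]
    simpa using hb
  obtain ⟨r, hr, ρ, hρ, hblocks⟩ :=
    hmix.exists_measure_birkhoffSum_nonneg_le hT hL hF (hfL.sub_const _) hZexp hZneg
  have hR : 0 < L * r := Nat.mul_pos hL hr
  set R := L * r
  let remainder (q n : ℕ) : ℝ≥0∞ := μ {ω | n * (a - b) + q * b ≤ f q ω}
  have hbound : (fun n ↦ μ {ω | n * a ≤ f n ω}) ≤
      (fun n ↦ r * ρ ^ (n / R)) + ∑ q ∈ Finset.range R, remainder q := by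
    intro n
    have hdiv : L * (r * (n / R)) + n % R = n := by rw [← mul_assoc, Nat.div_add_mod]
    have hset : {ω | n * a ≤ f n ω} ⊆
        {ω | 0 ≤ birkhoffSum T^[L] (fun ω ↦ f L ω - L * b) (r * (n / R)) ω} ∪
        T^[L * (r * (n / R))] ⁻¹' {ω | n * (a - b) + (n % R : ℕ) * b ≤ f (n % R) ω} := by
      intro ω (hω : n * a ≤ f n ω)
      have hcases := nonneg_birkhoffSum_or_le_of_mul_le hsub (b := b) (hdiv.symm ▸ hω)
      rwa [hdiv] at hcases
    rw [Pi.add_apply, Finset.sum_apply]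
    refine (measure_mono hset).trans ((measure_union_le _ _).trans (add_le_add (hblocks _) ?_))
    rw [(hT.iterate _).measure_preimage
      (measurableSet_le measurable_const (hf _)).nullMeasurableSet]
    exact Finset.single_le_sum (f := fun q ↦ remainder q n) (fun _ _ ↦ zero_le)
      (Finset.mem_range.2 (Nat.mod_lt n hR))
  refine (expGrowthSup_monotone hbound).trans_lt ?_
  rw [expGrowthSup_add, expGrowthSup_sum, sup_lt_iff, ← Finset.sup_eq_iSup,
    Finset.sup_lt_iff (by simp)]
  exact ⟨expGrowthSup_mul_pow_div_neg (ENNReal.natCast_ne_top r) hρ hR, fun q _ ↦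
    expGrowthSup_measure_mul_add_le_neg (hexp q) (sub_pos.2 hba) (q * b)⟩

end SubadditiveProcesses

section AlmostAdditiveProcesses

variable {Ω : Type*} {mΩ : MeasurableSpace Ω} {μ : Measure Ω} [IsProbabilityMeasure μ]
  {T : Ω → Ω} {F : ℕ → MeasurableSpace Ω} {f : ℕ → Ω → ℝ} {g : Ω → ℝ} {c : ℝ}

theorem expGrowthSup_measure_mul_le_almostAdditive_neg (hT : MeasurePreserving T μ μ)
    (hmix : UpperPsiMixing μ T F) (hF : ∀ n, F n ≤ mΩ) (hf : ∀ n, Measurable[F n] (f n))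
    (hg : 0 ∈ interior (integrableExpSet g μ))
    (hfg : ∀ n ω, |f n ω - birkhoffSum T g n ω| ≤ c) {a : ℝ} (ha : ∫ ω, g ω ∂μ < a) :
    expGrowthSup (fun n ↦ μ {ω | n * a ≤ f n ω}) < 0 := by
  have hc : 0 ≤ c := (abs_nonneg _).trans (hfg 0 (nonempty_of_isProbabilityMeasure μ).some)
  have hf' (n : ℕ) : Measurable (fun ω ↦ f n ω + 3 * c) := ((hf n).mono (hF n) le_rfl).add_const _
  have hsub (m n : ℕ) (ω : Ω) :
      f (m + n) ω + 3 * c ≤ f m ω + 3 * c + (f n (T^[m] ω) + 3 * c) := by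
    have hmn := (abs_le.1 (hfg (m + n) ω)).2
    have hm := (abs_le.1 (hfg m ω)).1
    have hn := (abs_le.1 (hfg n (T^[m] ω))).1
    rw [birkhoffSum_add] at hmn
    linarith
  have hclose (n : ℕ) (ω : Ω) : |f n ω + 3 * c - birkhoffSum T g n ω| ≤ 4 * c := by
    have hn := abs_le.1 (hfg n ω)
    exact abs_le.2 ⟨by linarith, by linarith⟩
  have hexp (n : ℕ) : 0 ∈ interior (integrableExpSet (fun ω ↦ f n ω + 3 * c) μ) :=
    zero_mem_interior_integrableExpSet_of_abs_sub_le (hf' n).aemeasurable (hclose n)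
      (zero_mem_interior_integrableExpSet_birkhoffSum hT hg n)
  obtain ⟨L, hL⟩ := exists_nat_gt (4 * c / (a - ∫ ω, g ω ∂μ))
  have hL_pos : 0 < L := by
    have : 0 ≤ 4 * c / (a - ∫ ω, g ω ∂μ) := div_nonneg (by positivity) (sub_pos.2 ha).le
    exact_mod_cast this.trans_lt hL
  have hmean : ∫ ω, (f L ω + 3 * c) ∂μ < L * a := by
    have hle := integral_le_of_le_birkhoffSum_add hT
      (integrable_of_mem_interior_integrableExpSet hg)
      (integrable_of_mem_interior_integrableExpSet (hexp L))
      fun ω ↦ sub_le_iff_le_add'.1 (abs_le.1 (hclose L ω)).2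
    rw [div_lt_iff₀ (sub_pos.2 ha)] at hL
    linarith
  refine (expGrowthSup_monotone fun n ↦ measure_mono fun ω (hω : n * a ≤ f n ω) ↦ ?_).trans_lt
    (expGrowthSup_measure_mul_le_subadditive_neg hT hmix hsub hf' hexp hL_pos (hF L)
      ((hf L).add_const _) hmean)
  exact hω.trans (le_add_of_nonneg_right (by positivity))

theorem expGrowthSup_measure_mul_le_abs_sub_almostAdditive_neg (hT : MeasurePreserving T μ μ)
    (hmix : UpperPsiMixing μ T F) (hF : ∀ n, F n ≤ mΩ) (hf : ∀ n, Measurable[F n] (f n))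
    (hg : 0 ∈ interior (integrableExpSet g μ))
    (hfg : ∀ n ω, |f n ω - birkhoffSum T g n ω| ≤ c) {δ : ℝ} (hδ : 0 < δ) :
    expGrowthSup (fun n ↦ μ {ω | n * δ ≤ |f n ω - n * ∫ ω', g ω' ∂μ|}) < 0 := by
  set I := ∫ ω, g ω ∂μ with hI
  have hupper : expGrowthSup (fun n ↦ μ {ω | n * (I + δ) ≤ f n ω}) < 0 :=
    expGrowthSup_measure_mul_le_almostAdditive_neg hT hmix hF hf hg hfg (lt_add_of_pos_right I hδ)
  have hlower : expGrowthSup (fun n ↦ μ {ω | n * (-I + δ) ≤ -f n ω}) < 0 := by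
    refine expGrowthSup_measure_mul_le_almostAdditive_neg (g := fun ω ↦ -g ω) (c := c) hT hmix hF
      (fun n ↦ (hf n).neg) (zero_mem_interior_integrableExpSet_neg hg) (fun n ω ↦ ?_) ?_
    · rw [birkhoffSum, Finset.sum_neg_distrib, ← birkhoffSum, Pi.neg_apply, neg_sub_neg,
        abs_sub_comm]
      exact hfg n ω
    · rw [integral_neg, ← hI]
      exact lt_add_of_pos_right _ hδ
  have hcover (n : ℕ) : {ω | n * δ ≤ |f n ω - n * I|} ⊆
      {ω | n * (I + δ) ≤ f n ω} ∪ {ω | n * (-I + δ) ≤ -f n ω} := by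
    intro ω (hω : n * δ ≤ |f n ω - n * I|)
    rcases le_abs.1 hω with h | h
    · exact .inl (show n * (I + δ) ≤ f n ω by linarith)
    · exact .inr (show n * (-I + δ) ≤ -f n ω by linarith)
  calc expGrowthSup (fun n ↦ μ {ω | n * δ ≤ |f n ω - n * I|})
      ≤ expGrowthSup ((fun n ↦ μ {ω | n * (I + δ) ≤ f n ω}) +
          fun n ↦ μ {ω | n * (-I + δ) ≤ -f n ω}) :=
        expGrowthSup_monotone fun n ↦ (measure_mono (hcover n)).trans (measure_union_le _ _)
    _ < 0 := by rw [expGrowthSup_add]; exact max_lt hupper hlower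

end AlmostAdditiveProcesses

section Shift

lemma iterate_shiftS_apply (k : ℕ) (ω : ℕ → ℕ+) (n : ℕ) : (shiftS^[k] ω) n = ω (n + k) := by
  induction k generalizing ω with
  | zero => rfl
  | succ k ih => rw [iterate_succ_apply, ih, shiftS, add_assoc, add_comm k]

lemma measurable_shiftS : Measurable shiftS :=
  measurable_pi_lambda _ fun _ ↦ measurable_pi_apply _

lemma finAlg_le (m : ℕ) : finAlg m ≤ MeasurableSpace.pi :=
  Measurable.comap_le (measurable_pi_lambda _ fun _ ↦ measurable_pi_apply _)

lemma measurable_finAlg_apply {i m : ℕ} (hi : i < m) :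
    Measurable[finAlg m] fun ω : ℕ → ℕ+ ↦ ((ω i : ℕ) : ℝ) := by
  have hcoord : Measurable fun v : Fin m → ℕ+ ↦ ((v ⟨i, hi⟩ : ℕ) : ℝ) :=
    (measurable_from_top (f := fun a : ℕ+ ↦ ((a : ℕ) : ℝ))).comp (measurable_pi_apply _)
  exact hcoord.comp (comap_measurable _)

lemma finAlg_mono : Monotone finAlg := by
  intro m n hmn
  have hrestrict : Measurable fun (v : Fin n → ℕ+) (i : Fin m) ↦ v (i.castLE hmn) :=
    measurable_pi_lambda _ fun _ ↦ measurable_pi_apply _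
  exact (hrestrict.comp (comap_measurable fun (ω : ℕ → ℕ+) (i : Fin n) ↦ ω i)).comap_le

lemma tailAlg_eq_comap (k : ℕ) : tailAlg k = MeasurableSpace.pi.comap shiftS^[k] := by
  have hshift : shiftS^[k] = fun ω i ↦ ω (i + k) := by
    ext1 ω
    exact funext (iterate_shiftS_apply k ω)
  rw [tailAlg, hshift]

namespace PsiMixing

variable {P : Measure (ℕ → ℕ+)} [IsFiniteMeasure P]

lemma exists_quasiIndep (hP : PsiMixing P) :
    ∃ ψ : ℕ → ℝ, Tendsto ψ atTop (𝓝 0) ∧ ∀ m n, 1 ≤ n →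
      QuasiIndep (finAlg m) P (ENNReal.ofReal (1 + ψ n)) shiftS^[m + n] := by
  obtain ⟨hshift, ψ, hψ_nonneg, hψ, hmix⟩ := hP
  refine ⟨ψ, hψ, fun m n hn A B hA hB ↦ ?_⟩
  have hA' := finAlg_le m A hA
  have hB' : MeasurableSet (shiftS^[m + n] ⁻¹' B) := (hshift.measurable.iterate _) hB
  have hB_tail : MeasurableSet[tailAlg (m + 1 + n - 1)] (shiftS^[m + n] ⁻¹' B) := by
    rw [show m + 1 + n - 1 = m + n by lia, tailAlg_eq_comap]
    exact ⟨B, hB, rfl⟩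
  have hAB := hmix (m + 1) n m.succ_pos hn _ _
    ((integrable_const (1 : ℝ)).indicator hA') ((integrable_const (1 : ℝ)).indicator hB')
    (measurable_const.indicator (finAlg_mono m.le_succ A hA))
    (measurable_const.indicator hB_tail)
  have habs (E : Set (ℕ → ℕ+)) (ω : ℕ → ℕ+) :
      |E.indicator (fun _ ↦ (1 : ℝ)) ω| = E.indicator (fun _ ↦ 1) ω :=
    abs_of_nonneg (Set.indicator_nonneg (fun _ _ ↦ zero_le_one) ω)
  simp only [habs, ← Set.inter_indicator_mul, mul_one] at hAB
  rw [integral_indicator_const _ (hA'.inter hB'), integral_indicator_const _ hA',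
    integral_indicator_const _ hB'] at hAB
  simp only [smul_eq_mul, mul_one] at hAB
  have hstat : P (shiftS^[m + n] ⁻¹' B) = P B :=
    (hshift.iterate _).measure_preimage hB.nullMeasurableSet
  rw [← hstat, ← ofReal_measureReal, ← ofReal_measureReal (s := A),
    ← ofReal_measureReal (s := shiftS^[m + n] ⁻¹' B), ← ENNReal.ofReal_mul measureReal_nonneg,
    ← ENNReal.ofReal_mul (add_nonneg zero_le_one (hψ_nonneg n))]
  refine ENNReal.ofReal_le_ofReal ?_
  linarith [le_abs_self (P.real (A ∩ shiftS^[m + n] ⁻¹' B) -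
    P.real A * P.real (shiftS^[m + n] ⁻¹' B))]

lemma upperPsiMixing (hP : PsiMixing P) : UpperPsiMixing P shiftS finAlg := by
  obtain ⟨ψ, hψ, hindep⟩ := hP.exists_quasiIndep
  intro C hC
  have hlim : Tendsto (fun k ↦ ENNReal.ofReal (1 + ψ k)) atTop (𝓝 1) := by
    simpa using ENNReal.tendsto_ofReal (hψ.const_add 1)
  filter_upwards [hlim.eventually_le_const hC, eventually_ge_atTop 1] with k hkC hk n A B hA hB
  exact (hindep n k hk hA hB).trans (mul_le_mul_left hkC _)

end PsiMixing

end Shift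

section ContinuedFractions

/-- The continued fraction denominator `Q_n(ω)` as a real number. -/
noncomputable def cfDenom (ω : ℕ → ℕ+) (n : ℕ) : ℝ := Qent ω n

variable (ω : ℕ → ℕ+)

lemma one_le_digit (i : ℕ) : (1 : ℝ) ≤ (ω i : ℕ) := by exact_mod_cast one_le

lemma cfDenom_zero : cfDenom ω 0 = 1 := by simp [cfDenom, Qent, cfQ]

lemma cfDenom_one : cfDenom ω 1 = (ω 0 : ℕ) := by simp [cfDenom, Qent, cfQ]

lemma cfDenom_add_two (n : ℕ) :
    cfDenom ω (n + 2) = (ω (n + 1) : ℕ) * cfDenom ω (n + 1) + cfDenom ω n := by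
  simp [cfDenom, Qent, cfQ]

lemma cfDenom_add_two_eq_shiftS (n : ℕ) :
    cfDenom ω (n + 2) = (ω 0 : ℕ) * cfDenom (shiftS ω) (n + 1) + cfDenom (shiftS^[2] ω) n := by
  induction n using Nat.twoStepInduction with
  | zero => simp [cfDenom_add_two, cfDenom_one, cfDenom_zero, shiftS, mul_comm]
  | one =>
    simp only [cfDenom_add_two, zero_add, cfDenom_one, cfDenom_zero, iterate_shiftS_apply, shiftS]
    ring
  | more n ih₀ ih₁ =>
    rw [cfDenom_add_two, ih₀, ih₁, cfDenom_add_two (shiftS ω) (n + 1),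
      cfDenom_add_two (shiftS^[2] ω)]
    simp only [iterate_shiftS_apply, shiftS]
    ring

lemma one_le_cfDenom_and_le_succ (n : ℕ) : 1 ≤ cfDenom ω n ∧ cfDenom ω n ≤ cfDenom ω (n + 1) := by
  induction n with
  | zero => simp [cfDenom_zero, cfDenom_one, one_le_digit ω 0]
  | succ n ih =>
    refine ⟨ih.1.trans ih.2, ?_⟩
    rw [cfDenom_add_two]
    nlinarith [one_le_digit ω (n + 1)]

lemma one_le_cfDenom (n : ℕ) : 1 ≤ cfDenom ω n := (one_le_cfDenom_and_le_succ ω n).1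

lemma cfDenom_pos (n : ℕ) : 0 < cfDenom ω n := zero_lt_one.trans_le (one_le_cfDenom ω n)

lemma measurable_cfDenom (n : ℕ) : Measurable[finAlg n] fun ω ↦ cfDenom ω n := by
  suffices ∀ m, n ≤ m → Measurable[finAlg m] fun ω ↦ cfDenom ω n from this n le_rfl
  intro m hnm
  induction n using Nat.twoStepInduction with
  | zero => simp only [cfDenom_zero, measurable_const]
  | one => simpa only [cfDenom_one] using measurable_finAlg_apply hnm
  | more n ih₀ ih₁ =>
    simp only [cfDenom_add_two]
    exact ((measurable_finAlg_apply hnm).mul (ih₁ (by lia))).add (ih₀ (by lia))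

lemma cfP_add_two (n : ℕ) :
    (cfP (fun i ↦ (ω (i - 1) : ℕ)) (n + 2) : ℝ) = cfDenom (shiftS ω) n := by
  induction n using Nat.twoStepInduction with
  | zero => simp [cfP, cfDenom_zero]
  | one => simp [cfP, cfDenom_one, shiftS]
  | more n ih₀ ih₁ =>
    rw [cfP, cfDenom_add_two, ← ih₀, ← ih₁]
    push_cast
    rfl

/-- The convergent `[A_1, …, A_{n+1}]` of `ω`. The index is shifted by one so that all values are
positive, the convergent with no digits being `0`. -/
noncomputable def cfConvergent (ω : ℕ → ℕ+) (n : ℕ) : ℝ :=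
  cfConv (fun i ↦ (ω (i - 1) : ℕ)) (n + 1)

lemma cfConvergent_eq_div (n : ℕ) :
    cfConvergent ω n = cfDenom (shiftS ω) n / cfDenom ω (n + 1) := by
  rw [cfConvergent, cfConv, cfP_add_two]
  rfl

lemma cfConvergent_pos (n : ℕ) : 0 < cfConvergent ω n := by
  rw [cfConvergent_eq_div]
  exact div_pos (cfDenom_pos _ _) (cfDenom_pos _ _)

lemma cfConvergent_succ_mul_digit_add (n : ℕ) :
    cfConvergent ω (n + 1) * ((ω 0 : ℕ) + cfConvergent (shiftS ω) n) = 1 := by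
  have hω := (cfDenom_pos ω (n + 2)).ne'
  have hσ := (cfDenom_pos (shiftS ω) (n + 1)).ne'
  rw [cfConvergent_eq_div, cfConvergent_eq_div]
  field_simp
  rw [cfDenom_add_two_eq_shiftS, mul_comm (cfDenom _ _)]
  rfl

lemma cfConvergent_le_one (n : ℕ) : cfConvergent ω n ≤ 1 := by
  have hω := one_le_digit ω 0
  cases n with
  | zero =>
    rw [cfConvergent_eq_div, cfDenom_zero, cfDenom_one]
    exact div_le_one_of_le₀ hω (by positivity)
  | succ n =>
    nlinarith [cfConvergent_succ_mul_digit_add ω n, cfConvergent_pos ω (n + 1),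
      cfConvergent_pos (shiftS ω) n]

lemma cfConvergent_succ_mul_shiftS_le (n : ℕ) :
    cfConvergent ω (n + 1) * cfConvergent (shiftS ω) n ≤ 1 / 2 := by
  have hω := one_le_digit ω 0
  nlinarith [cfConvergent_succ_mul_digit_add ω n, cfConvergent_pos ω (n + 1),
    cfConvergent_le_one (shiftS ω) n]

lemma cfConvergent_succ_sub_succ (m n : ℕ) :
    cfConvergent ω (m + 1) - cfConvergent ω (n + 1) =
      cfConvergent ω (m + 1) * cfConvergent ω (n + 1) *
        (cfConvergent (shiftS ω) n - cfConvergent (shiftS ω) m) := by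
  linear_combination cfConvergent ω (n + 1) * cfConvergent_succ_mul_digit_add ω m -
    cfConvergent ω (m + 1) * cfConvergent_succ_mul_digit_add ω n

lemma abs_cfConvergent_sub_succ_le (n : ℕ) :
    |cfConvergent ω n - cfConvergent ω (n + 1)| ≤ 2 * (1 / 2) ^ n := by
  have hle (ω : ℕ → ℕ+) (k : ℕ) : |cfConvergent ω k - cfConvergent ω (k + 1)| ≤ 1 :=
    abs_sub_le_iff.2 ⟨by linarith [cfConvergent_le_one ω k, cfConvergent_pos ω (k + 1)],
      by linarith [cfConvergent_le_one ω (k + 1), cfConvergent_pos ω k]⟩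
  induction n using Nat.twoStepInduction generalizing ω with
  | zero => linarith [hle ω 0]
  | one => linarith [hle ω 1]
  | more n ih _ =>
    set x := cfConvergent ω (n + 2) * cfConvergent (shiftS ω) (n + 1) with hx
    set y := cfConvergent ω (n + 3) * cfConvergent (shiftS ω) (n + 2) with hy
    have hxy : |x * y| ≤ 1 / 2 * (1 / 2) := by
      rw [abs_of_pos (mul_pos (mul_pos (cfConvergent_pos _ _) (cfConvergent_pos _ _))
        (mul_pos (cfConvergent_pos _ _) (cfConvergent_pos _ _)))]
      exact mul_le_mul (cfConvergent_succ_mul_shiftS_le ω (n + 1))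
        (cfConvergent_succ_mul_shiftS_le ω (n + 2))
        (mul_pos (cfConvergent_pos _ _) (cfConvergent_pos _ _)).le (by norm_num)
    calc |cfConvergent ω (n + 2) - cfConvergent ω (n + 3)|
        = |x * y| * |cfConvergent (shiftS^[2] ω) n - cfConvergent (shiftS^[2] ω) (n + 1)| := by
          rw [cfConvergent_succ_sub_succ, cfConvergent_succ_sub_succ, ← abs_mul, hx, hy]
          congr 1
          simp only [iterate_succ_apply, iterate_zero_apply]
          ring
      _ ≤ 1 / 2 * (1 / 2) * (2 * (1 / 2) ^ n) := by
          gcongr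
          exact ih _
      _ = 2 * (1 / 2) ^ (n + 2) := by ring

lemma tendsto_cfConvergent : Tendsto (cfConvergent ω) atTop (𝓝 (Xtail ω 1)) := by
  have hcauchy : CauchySeq (cfConvergent ω) :=
    cauchySeq_of_le_geometric (1 / 2) 2 (by norm_num) (abs_cfConvergent_sub_succ_le ω)
  exact (tendsto_add_atTop_iff_nat 1).2 ((cauchySeq_shift 1).1 hcauchy).tendsto_limUnder

lemma Xtail_mul_digit_add_Xtail : Xtail ω 1 * ((ω 0 : ℕ) + Xtail (shiftS ω) 1) = 1 := by
  have hω := (tendsto_add_atTop_iff_nat 1).2 (tendsto_cfConvergent ω)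
  refine tendsto_nhds_unique (hω.mul ((tendsto_cfConvergent (shiftS ω)).const_add _)) ?_
  simp only [cfConvergent_succ_mul_digit_add, tendsto_const_nhds]

lemma Xtail_le_one : Xtail ω 1 ≤ 1 :=
  le_of_tendsto' (tendsto_cfConvergent ω) (cfConvergent_le_one ω)

lemma Xtail_pos : 0 < Xtail ω 1 := by
  have hnonneg : 0 ≤ Xtail ω 1 :=
    ge_of_tendsto' (tendsto_cfConvergent ω) fun n ↦ (cfConvergent_pos ω n).le
  exact hnonneg.lt_of_ne (left_ne_zero_of_mul_eq_one (Xtail_mul_digit_add_Xtail ω)).symm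

lemma measurable_Xtail : Measurable fun ω ↦ Xtail ω 1 := by
  refine measurable_of_tendsto_metrizable (f := fun n ω ↦ cfConvergent ω n) (fun n ↦ ?_)
    (tendsto_pi_nhds.2 tendsto_cfConvergent)
  have hmeas (k : ℕ) : Measurable fun ω ↦ cfDenom ω k :=
    (measurable_cfDenom k).mono (finAlg_le k) le_rfl
  simp only [cfConvergent_eq_div]
  exact ((hmeas n).comp measurable_shiftS).div (hmeas (n + 1))

lemma cfDenom_add_mul_prod_Xtail (n : ℕ) :
    (cfDenom ω (n + 1) + cfDenom ω n * Xtail (shiftS^[n + 1] ω) 1) *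
      ∏ k ∈ Finset.range (n + 1), Xtail (shiftS^[k] ω) 1 = 1 := by
  induction n with
  | zero =>
    have hω := Xtail_mul_digit_add_Xtail ω
    simpa [cfDenom_zero, cfDenom_one, mul_comm] using hω
  | succ n ih =>
    have hrec := Xtail_mul_digit_add_Xtail (shiftS^[n + 1] ω)
    rw [iterate_shiftS_apply, zero_add, ← iterate_succ_apply' shiftS] at hrec
    rw [← ih, Finset.prod_range_succ _ (n + 1), cfDenom_add_two]
    linear_combination (cfDenom ω (n + 1) * ∏ k ∈ Finset.range (n + 1), Xtail (shiftS^[k] ω) 1) *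
      hrec

lemma abs_log_cfDenom_sub_birkhoffSum_le (n : ℕ) :
    |log (cfDenom ω n) - birkhoffSum shiftS (fun ω ↦ -log (Xtail ω 1)) n ω| ≤ log 2 := by
  cases n with
  | zero => simp [cfDenom_zero, log_nonneg one_le_two]
  | succ n =>
    set x := Xtail (shiftS^[n + 1] ω) 1
    have hx : 0 < x := Xtail_pos _
    have hx1 : x ≤ 1 := Xtail_le_one _
    have hQ := cfDenom_pos ω (n + 1)
    have hsum : birkhoffSum shiftS (fun ω ↦ -log (Xtail ω 1)) (n + 1) ω =
        log (cfDenom ω (n + 1) + cfDenom ω n * x) := by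
      rw [birkhoffSum, Finset.sum_neg_distrib, ← log_prod fun k _ ↦ (Xtail_pos _).ne', ← log_inv,
        eq_inv_of_mul_eq_one_left (cfDenom_add_mul_prod_Xtail ω n)]
    have hlower : log (cfDenom ω (n + 1)) ≤ log (cfDenom ω (n + 1) + cfDenom ω n * x) :=
      log_le_log hQ (le_add_of_nonneg_right (mul_pos (cfDenom_pos ω n) hx).le)
    have hupper : log (cfDenom ω (n + 1) + cfDenom ω n * x) ≤ log 2 + log (cfDenom ω (n + 1)) := by
      rw [← log_mul two_ne_zero hQ.ne']
      refine log_le_log (add_pos hQ (mul_pos (cfDenom_pos ω n) hx)) ?_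
      nlinarith [cfDenom_pos ω n, (one_le_cfDenom_and_le_succ ω n).2]
    rw [hsum, abs_sub_comm, abs_of_nonneg (sub_nonneg.2 hlower)]
    linarith

lemma zero_mem_interior_integrableExpSet_neg_log_Xtail {P : Measure (ℕ → ℕ+)} {t : ℝ}
    (ht : 0 < t) (hmom : Integrable (fun ω : ℕ → ℕ+ ↦ ((ω 0 : ℕ) : ℝ) ^ t) P) :
    0 ∈ interior (integrableExpSet (fun ω ↦ -log (Xtail ω 1)) P) := by
  have hdigit : Measurable fun ω : ℕ → ℕ+ ↦ ((ω 0 : ℕ) : ℝ) :=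
    (measurable_finAlg_apply one_pos).mono (finAlg_le 1) le_rfl
  refine zero_mem_interior_integrableExpSet_of_abs_sub_le (c := log 2)
    measurable_Xtail.log.neg.aemeasurable (fun ω ↦ ?_)
    (zero_mem_interior_integrableExpSet_log hdigit.aemeasurable (fun ω ↦ one_le_digit ω 0) ht hmom)
  rw [abs_sub_comm]
  simpa [cfDenom_one] using abs_log_cfDenom_sub_birkhoffSum_le ω 1

end ContinuedFractions

theorem random_levy_chernoff_general (P : Measure (ℕ → ℕ+)) [IsProbabilityMeasure P]
    (hP : MeasurePreserving shiftS P P) (hmix : UpperPsiMixing P shiftS finAlg) {t : ℝ}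
    (ht : 0 < t) (hmom : Integrable (fun ω : ℕ → ℕ+ ↦ ((ω 0 : ℕ) : ℝ) ^ t) P)
    (δ : ℝ) (hδ : 0 < δ) :
    ∃ (N : ℕ) (B α : ℝ), 0 < N ∧ 0 < B ∧ 0 < α ∧ ∀ n : ℕ, N ≤ n →
      P {ω : ℕ → ℕ+ |
          δ ≤ |(1 / (n : ℝ)) * log (Qent ω n : ℝ) + ∫ ω', log (Xtail ω' 1) ∂P|} ≤
        ENNReal.ofReal (B * exp (-α * n)) := by
  have hdecay := expGrowthSup_measure_mul_le_abs_sub_almostAdditive_neg hP hmix finAlg_le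
    (fun n ↦ (measurable_cfDenom n).log)
    (zero_mem_interior_integrableExpSet_neg_log_Xtail ht hmom)
    (fun n ω ↦ abs_log_cfDenom_sub_birkhoffSum_le ω n) hδ
  obtain ⟨α, hα, hbound⟩ := expGrowthSup_neg_iff.1 hdecay
  obtain ⟨N, hN⟩ := eventually_atTop.1 hbound
  refine ⟨N + 1, 1, α, N.succ_pos, one_pos, hα, fun n hn ↦ ?_⟩
  rw [one_mul]
  have hn_pos : (0 : ℝ) < n := by exact_mod_cast N.succ_pos.trans_le hn
  refine (measure_mono fun ω hω ↦ ?_).trans (hN n (N.le_succ.trans hn))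
  change n * δ ≤ |log (Qent ω n) - n * ∫ ω', -log (Xtail ω' 1) ∂P|
  calc n * δ ≤ n * |1 / (n : ℝ) * log (Qent ω n) + ∫ ω', log (Xtail ω' 1) ∂P| := by
        gcongr
        exact hω
    _ = |log (Qent ω n) - n * ∫ ω', -log (Xtail ω' 1) ∂P| := by
        rw [integral_neg, ← abs_of_pos hn_pos, ← abs_mul, abs_of_pos hn_pos]
        congr 1
        field_simp
        ring

/-- **Chernoff-type estimate for random continued fractions.** If `{A_n}` is
ψ-mixing and `E(A_1^t) < ∞` for each `0 < t < 1`, then for every `δ > 0` there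
exist `N > 0`, `B > 0`, `α > 0` such that for all `n ≥ N`,
`P(|(1/n) log Q_n + ∫ log X dP| ≥ δ) ≤ B exp(−α n)`. -/
theorem random_levy_chernoff (P : Measure (ℕ → ℕ+)) [IsProbabilityMeasure P]
    (hmix : PsiMixing P)
    (hmom : ∀ t : ℝ, 0 < t → t < 1 →
      Integrable (fun ω : ℕ → ℕ+ => ((ω 0 : ℕ) : ℝ) ^ t) P)
    (δ : ℝ) (hδ : 0 < δ) :
    ∃ (N : ℕ) (B α : ℝ), 0 < N ∧ 0 < B ∧ 0 < α ∧ ∀ n : ℕ, N ≤ n →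
      P {ω : ℕ → ℕ+ |
          δ ≤ |(1 / (n : ℝ)) * Real.log ((Qent ω n : ℝ)) +
                ∫ ω', Real.log (Xtail ω' 1) ∂P|} ≤
        ENNReal.ofReal (B * Real.exp (-α * n)) := by
  exact random_levy_chernoff_general P hmix.1 hmix.upperPsiMixing one_half_pos
    (hmom _ one_half_pos one_half_lt_one) δ hδ
end
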